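/- arXiv:2202.00877 — 2 statements merged into one kernel-verified Lean document; each statement's English description precedes it below -/
import Mathlib

section
/- Fix γ₀ ∈ ℝ, an integer ℓ ≥ 0, and set c₁ := (C₊+C₋)·cos(πY/2)·Γ(−Y) (so c₁ < 0) and c₂ := (C₋−C₊)·sin(πY/2)·Γ(−Y). Then, as h → 0 with ε = ε(h) → 0 and ε(h)/√h → ∞, for each choice of sign the (absolutely convergent) integral I(ℓ) := ∫_ℝ u^ℓ · exp( iu(ε ± γ₀h) − (1/2)σ²u²h + |u|^Y·h·(c₁ ∓ ic₂·sgn(u)) ) du satisfies I(ℓ) = O(h·ε^{−Y−ℓ−1}) + O(h^{−ℓ−1/2}·ε^{ℓ}·e^{−ε²/(2σ²h)}). -/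
open MeasureTheory ProbabilityTheory Filter Asymptotics Set
open scoped Topology NNReal ENNReal Real

noncomputable section

/-- The holomorphic integrand on the right half plane. -/
def oscF (ℓ : ℕ) (a b : ℝ) (q : ℂ) (Y : ℝ) (z : ℂ) : ℂ :=
  z ^ ℓ * Complex.exp (Complex.I * a * z - b * z ^ 2 / 2 + q * z ^ (Y : ℂ))

lemma exponent_bound (A B c Y : ℝ) (hY0 : 0 < Y) (hY2 : Y < 2) (hc : 0 < c) (hB : 0 ≤ B) :
    ∃ K : ℝ, ∀ r : ℝ, 0 ≤ r → A * r + B * r ^ Y - c * r ^ 2 ≤ K - r := by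
  have h2 : ∀ᶠ r : ℝ in atTop, r ^ Y ≤ c / (2 * (B + 1)) * r ^ 2 := by
    have h1 := (tendsto_rpow_neg_atTop (show 0 < 2 - Y by linarith)).eventually
      (eventually_le_nhds (show (0:ℝ) < c / (2 * (B + 1)) by positivity))
    filter_upwards [h1, eventually_gt_atTop 0] with r h1 hr
    have : r ^ Y = r ^ (-(2 - Y)) * r ^ 2 := by
      rw [← Real.rpow_two, ← Real.rpow_add hr]; ring_nf
    rw [this]
    gcongr
  obtain ⟨R, hR⟩ := eventually_atTop.1 h2
  refine ⟨B * (max R 0) ^ Y + (A + 1) ^ 2 / (2 * c), fun r hr => ?_⟩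
  have h3 : B * r ^ Y ≤ c / 2 * r ^ 2 + B * (max R 0) ^ Y := by
    rcases le_total R r with h | h
    · have := hR r h
      have h5 : B * r ^ Y ≤ (B + 1) * (c / (2 * (B + 1)) * r ^ 2) := by
        have : 0 ≤ r ^ Y := by positivity
        nlinarith
      have h6 : (B + 1) * (c / (2 * (B + 1)) * r ^ 2) = c / 2 * r ^ 2 := by
        field_simp
      have : 0 ≤ B * (max R 0) ^ Y := by positivity
      linarith
    · have : r ^ Y ≤ (max R 0) ^ Y :=
        Real.rpow_le_rpow hr (h.trans (le_max_left _ _)) hY0.le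
      have : B * r ^ Y ≤ B * (max R 0) ^ Y := by gcongr
      have : 0 ≤ c / 2 * r ^ 2 := by positivity
      linarith
  have h4 : (A + 1) * r - c / 2 * r ^ 2 ≤ (A + 1) ^ 2 / (2 * c) := by
    rw [le_div_iff₀ (by positivity)]
    nlinarith [sq_nonneg (c * r - (A + 1))]
  linarith

lemma norm_w_le {τ : ℝ} (hτ : |τ| ≤ 1 / 2) : ‖(1 + Complex.I * τ : ℂ)‖ ≤ 2 := by
  calc ‖(1 + Complex.I * τ : ℂ)‖ ≤ ‖(1 : ℂ)‖ + ‖Complex.I * (τ : ℂ)‖ := norm_add_le _ _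
    _ = 1 + |τ| := by simp
    _ ≤ 2 := by linarith

lemma oscF_bound (ℓ : ℕ) (a b : ℝ) (q : ℂ) (Y : ℝ) (hb : 0 < b) (hY0 : 0 < Y) (hY2 : Y < 2) :
    ∃ M : ℝ, 0 ≤ M ∧ ∀ r : ℝ, 0 < r → ∀ τ : ℝ, |τ| ≤ 1 / 2 → ∀ z : ℂ, z = r * (1 + Complex.I * τ) →
      ‖oscF ℓ a b q Y z‖ * (1 + ℓ + |a| * ‖z‖ + b * ‖z‖ ^ 2 + ‖q‖ * Y * ‖z‖ ^ Y)
        ≤ M * Real.exp (-r) := by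
  obtain ⟨K, hK⟩ := exponent_bound (4 + 2 * |a|) (‖q‖ * 2 ^ Y) (3 / 8 * b) Y hY0 hY2
    (by positivity) (by positivity)
  refine ⟨(1 + ℓ + |a| + 2 * b + 3 * ‖q‖ * Y) * (ℓ.factorial * Real.exp K), by positivity, ?_⟩
  intro r hr τ hτ z hz
  have hx2 : ‖z‖ ≤ 2 * r := by
    rw [hz, norm_mul, Complex.norm_real, Real.norm_of_nonneg hr.le]
    nlinarith [norm_w_le hτ]
  set x := ‖z‖ with hx
  have hx0 : 0 ≤ x := norm_nonneg _
  have e1 : 1 ≤ Real.exp x := Real.one_le_exp hx0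
  have e2 : x ≤ Real.exp x := by linarith [Real.add_one_le_exp x]
  have e3 : x ^ 2 ≤ 2 * Real.exp x := by
    have := Real.quadratic_le_exp_of_nonneg hx0
    linarith
  have e4 : x ^ Y ≤ 3 * Real.exp x := by
    rcases le_total x 1 with h | h
    · have := Real.rpow_le_one hx0 h hY0.le
      linarith
    · have : x ^ Y ≤ x ^ (2 : ℝ) := Real.rpow_le_rpow_of_exponent_le h hY2.le
      rw [Real.rpow_two] at this
      linarith
  have hP : 1 + ℓ + |a| * x + b * x ^ 2 + ‖q‖ * Y * x ^ Y
      ≤ (1 + ℓ + |a| + 2 * b + 3 * ‖q‖ * Y) * Real.exp x := by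
    have g1 : (1 + ℓ : ℝ) ≤ (1 + ℓ) * Real.exp x := le_mul_of_one_le_right (by positivity) e1
    have g2 : |a| * x ≤ |a| * Real.exp x := by gcongr
    have g3 : b * x ^ 2 ≤ b * (2 * Real.exp x) := by gcongr
    have g4 : ‖q‖ * Y * x ^ Y ≤ ‖q‖ * Y * (3 * Real.exp x) := by gcongr
    linarith
  have hF : ‖oscF ℓ a b q Y z‖ ≤ ℓ.factorial * Real.exp x *
      Real.exp (2 * |a| * r + ‖q‖ * 2 ^ Y * r ^ Y - 3 / 8 * b * r ^ 2) := by
    rw [oscF, norm_mul, norm_pow, ← hx, Complex.norm_exp]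
    have k1 : x ^ ℓ ≤ ℓ.factorial * Real.exp x := by
      have := Real.pow_div_factorial_le_exp x hx0 ℓ
      rw [div_le_iff₀ (by positivity)] at this
      linarith
    have k2 : (Complex.I * a * z).re ≤ 2 * |a| * r := by
      refine (Complex.re_le_norm _).trans ?_
      rw [norm_mul, norm_mul, Complex.norm_I, Complex.norm_real, ← hx, Real.norm_eq_abs]
      nlinarith [abs_nonneg a]
    have k3 : (q * z ^ (Y : ℂ)).re ≤ ‖q‖ * 2 ^ Y * r ^ Y := by
      refine (Complex.re_le_norm _).trans ?_
      rw [norm_mul, Complex.norm_cpow_real, ← hx, mul_assoc, ← Real.mul_rpow (by norm_num) hr.le]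
      gcongr
    have k4 : (b * z ^ 2 / 2).re = b * r ^ 2 * (1 - τ ^ 2) / 2 := by
      have : (b * z ^ 2 / 2 : ℂ) = ((b * r ^ 2 * (1 - τ ^ 2) / 2 : ℝ) : ℂ)
          + ((b * r ^ 2 * τ : ℝ) : ℂ) * Complex.I := by
        rw [hz]; push_cast; linear_combination (b * r ^ 2 * τ ^ 2 / 2 : ℂ) * Complex.I_sq
      rw [this, Complex.add_re, Complex.ofReal_re, Complex.re_ofReal_mul, Complex.I_re]
      ring
    have k5 : τ ^ 2 ≤ 1 / 4 := by
      have := abs_le.1 hτ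
      nlinarith
    have k6 : 3 / 8 * b * r ^ 2 ≤ b * r ^ 2 * (1 - τ ^ 2) / 2 := by
      have : 0 ≤ b * r ^ 2 := by positivity
      nlinarith
    rw [Complex.add_re, Complex.sub_re, k4]
    gcongr
    linarith
  calc _ ≤ (ℓ.factorial * Real.exp x *
      Real.exp (2 * |a| * r + ‖q‖ * 2 ^ Y * r ^ Y - 3 / 8 * b * r ^ 2)) *
        ((1 + ℓ + |a| + 2 * b + 3 * ‖q‖ * Y) * Real.exp x) := by
        gcongr
    _ = (1 + ℓ + |a| + 2 * b + 3 * ‖q‖ * Y) * (ℓ.factorial *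
        Real.exp (x + x + (2 * |a| * r + ‖q‖ * 2 ^ Y * r ^ Y - 3 / 8 * b * r ^ 2))) := by
        rw [Real.exp_add, Real.exp_add]; ring
    _ ≤ (1 + ℓ + |a| + 2 * b + 3 * ‖q‖ * Y) * (ℓ.factorial * Real.exp (K + -r)) := by
        have := hK r hr.le
        have : x + x + (2 * |a| * r + ‖q‖ * 2 ^ Y * r ^ Y - 3 / 8 * b * r ^ 2) ≤ K + -r := by
          linarith
        gcongr
    _ = _ := by rw [Real.exp_add]; ring

/-- `z F'(z)`. -/
def oscG (ℓ : ℕ) (a b : ℝ) (q : ℂ) (Y : ℝ) (z : ℂ) : ℂ :=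
  oscF ℓ a b q Y z * (ℓ + Complex.I * a * z - b * z ^ 2 + q * Y * z ^ (Y : ℂ))

lemma oscF_hasDerivAt (ℓ : ℕ) (a b : ℝ) (q : ℂ) (Y : ℝ) (z : ℂ) (hz : 0 < z.re) :
    HasDerivAt (oscF ℓ a b q Y) (oscG ℓ a b q Y z / z) z := by
  have hz0 : z ≠ 0 := by rintro rfl; simp at hz
  have hs : z ∈ Complex.slitPlane := Or.inl hz
  have h1 := hasDerivAt_pow ℓ z
  have h2 : HasDerivAt (fun z : ℂ => z ^ (Y : ℂ)) ((Y : ℂ) * z ^ ((Y : ℂ) - 1) * 1) z :=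
    (hasDerivAt_id z).cpow_const hs
  have h3 : HasDerivAt (fun z : ℂ => Complex.I * a * z - b * z ^ 2 / 2 + q * z ^ (Y : ℂ))
      (Complex.I * a - b * z + q * (Y * z ^ ((Y : ℂ) - 1))) z := by
    have := (((hasDerivAt_id z).const_mul (Complex.I * (a:ℂ))).sub
      (((hasDerivAt_pow 2 z).const_mul (b : ℂ)).div_const 2)).add (h2.const_mul q)
    refine this.congr_deriv ?_
    push_cast; ring
  refine (h1.mul h3.cexp).congr_deriv ?_
  rw [oscG, oscF, Complex.cpow_sub _ _ hz0, Complex.cpow_one]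
  rcases ℓ with _ | n
  · simp; field_simp
  · simp only [Nat.add_sub_cancel, pow_succ]; field_simp; push_cast; ring

lemma oscG_norm_le (ℓ : ℕ) (a b : ℝ) (q : ℂ) (Y : ℝ) (hb : 0 < b) (hY : 0 < Y) (z : ℂ) :
    ‖oscF ℓ a b q Y z‖ + ‖oscG ℓ a b q Y z‖ ≤
     ‖oscF ℓ a b q Y z‖ * (1 + ℓ + |a| * ‖z‖ + b * ‖z‖ ^ 2 + ‖q‖ * Y * ‖z‖ ^ Y) := by
  have : ‖(ℓ + Complex.I * a * z - b * z ^ 2 + q * Y * z ^ (Y : ℂ) : ℂ)‖ ≤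
      ℓ + |a| * ‖z‖ + b * ‖z‖ ^ 2 + ‖q‖ * Y * ‖z‖ ^ Y := by
    refine (norm_add_le _ _).trans ?_
    refine add_le_add ((norm_sub_le _ _).trans (add_le_add ((norm_add_le _ _).trans ?_) ?_)) ?_
    · simp
    · simp [abs_of_pos hb]
    · simp [abs_of_pos hY, Complex.norm_cpow_real]
  rw [oscG, norm_mul]
  nlinarith [norm_nonneg (oscF ℓ a b q Y z)]

lemma oscF_rot (ℓ : ℕ) (a b : ℝ) (q : ℂ) (Y : ℝ) (hb : 0 < b) (hY0 : 0 < Y) (hY2 : Y < 2)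
    (τ₀ : ℝ) (h0 : 0 ≤ τ₀) (h1 : τ₀ ≤ 1 / 4) :
    ∫ r in Ioi (0 : ℝ), oscF ℓ a b q Y r =
      ∫ r in Ioi (0 : ℝ), (1 + Complex.I * τ₀) * oscF ℓ a b q Y (r * (1 + Complex.I * τ₀)) := by
  obtain ⟨M, hM0, hM⟩ := oscF_bound ℓ a b q Y hb hY0 hY2
  have hint : IntegrableOn (fun r : ℝ => M * Real.exp (-r)) (Ioi 0) :=
    (integrableOn_exp_neg_Ioi 0).const_mul M
  have hFG : ∀ r : ℝ, 0 < r → ∀ τ : ℝ, |τ| ≤ 1 / 2 →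
      ‖oscF ℓ a b q Y (r * (1 + Complex.I * τ))‖ + ‖oscG ℓ a b q Y (r * (1 + Complex.I * τ))‖
        ≤ M * Real.exp (-r) := fun r hr τ hτ =>
    (oscG_norm_le ℓ a b q Y hb hY0 _).trans (hM r hr τ hτ _ rfl)
  have hre : ∀ r : ℝ, 0 < r → ∀ τ : ℝ, 0 < ((r : ℂ) * (1 + Complex.I * τ)).re := by
    intro r hr τ
    simpa using hr
  have hz0 : ∀ r : ℝ, 0 < r → ∀ τ : ℝ, ((r : ℂ) * (1 + Complex.I * τ)) ≠ 0 := by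
    intro r hr τ h
    have := hre r hr τ
    rw [h] at this; simp at this
  -- derivative in `r`
  have hdr : ∀ r : ℝ, 0 < r → ∀ τ : ℝ,
      HasDerivAt (fun r : ℝ => oscF ℓ a b q Y (r * (1 + Complex.I * τ)))
        (oscG ℓ a b q Y (r * (1 + Complex.I * τ)) / r) r := by
    intro r hr τ
    have hr0 : (r : ℂ) ≠ 0 := by exact_mod_cast hr.ne'
    have e1 : HasDerivAt (fun r : ℝ => (r : ℂ) * (1 + Complex.I * τ)) (1 * (1 + Complex.I * τ)) r :=
      (Complex.ofRealCLM.hasDerivAt (x := r)).mul_const _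
    have := (oscF_hasDerivAt ℓ a b q Y _ (hre r hr τ)).comp r e1
    refine this.congr_deriv ?_
    have := hz0 r hr τ
    have h2 := (mul_ne_zero_iff.1 this).2
    field_simp
  have hdτ : ∀ r : ℝ, 0 < r → ∀ τ : ℝ,
      HasDerivAt (fun τ : ℝ => (1 + Complex.I * τ) * oscF ℓ a b q Y (r * (1 + Complex.I * τ)))
        (Complex.I * (oscF ℓ a b q Y (r * (1 + Complex.I * τ)) +
          oscG ℓ a b q Y (r * (1 + Complex.I * τ)))) τ := by
    intro r hr τ
    have hr0 : (r : ℂ) ≠ 0 := by exact_mod_cast hr.ne'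
    have e0 : HasDerivAt (fun τ : ℝ => (1 + Complex.I * τ : ℂ)) (Complex.I * 1) τ :=
      ((Complex.ofRealCLM.hasDerivAt (x := τ)).const_mul _).const_add _
    have e1 := e0.const_mul (r : ℂ)
    have e2 := (oscF_hasDerivAt ℓ a b q Y _ (hre r hr τ)).comp τ e1
    refine (e0.mul e2).congr_deriv ?_
    have := hz0 r hr τ
    have h2 := (mul_ne_zero_iff.1 this).2
    simp only [Function.comp]
    field_simp
  have hcF : ∀ τ : ℝ, ContinuousOn (fun r : ℝ => oscF ℓ a b q Y (r * (1 + Complex.I * τ))) (Ioi 0) :=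
    fun τ r hr => (hdr r hr τ).continuousAt.continuousWithinAt
  have hcG : ∀ τ : ℝ, ContinuousOn (fun r : ℝ => oscG ℓ a b q Y (r * (1 + Complex.I * τ))) (Ioi 0) := by
    intro τ r hr
    have c1 : ContinuousAt (fun r : ℝ => (r : ℂ) * (1 + Complex.I * τ)) r := by fun_prop
    have c2 : ContinuousAt (fun r : ℝ => ((r : ℂ) * (1 + Complex.I * τ)) ^ (Y : ℂ)) r :=
      c1.cpow continuousAt_const (Or.inl (hre r hr τ))
    have c3 := (hdr r hr τ).continuousAt
    refine ContinuousAt.continuousWithinAt ?_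
    unfold oscG
    refine c3.mul ?_
    fun_prop
  have hderiv : ∀ τ ∈ Ioo (-(1 / 2) : ℝ) (1 / 2), HasDerivAt (fun τ : ℝ => ∫ r in Ioi (0 : ℝ),
      (1 + Complex.I * τ) * oscF ℓ a b q Y (r * (1 + Complex.I * τ))) 0 τ := by
    intro τ hτ
    have hτ' : |τ| ≤ 1 / 2 := abs_le.2 ⟨hτ.1.le, hτ.2.le⟩
    have hFint : IntegrableOn (fun r : ℝ => oscF ℓ a b q Y (r * (1 + Complex.I * τ))) (Ioi 0) := by
      refine Integrable.mono' hint ((hcF τ).aestronglyMeasurable measurableSet_Ioi) ?_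
      refine (ae_restrict_iff' measurableSet_Ioi).2 (ae_of_all _ fun r hr => ?_)
      linarith [hFG r hr τ hτ', norm_nonneg (oscG ℓ a b q Y (r * (1 + Complex.I * τ)))]
    have key := hasDerivAt_integral_of_dominated_loc_of_deriv_le
      (μ := volume.restrict (Ioi (0 : ℝ))) (𝕜 := ℝ)
      (F := fun τ r => (1 + Complex.I * τ) * oscF ℓ a b q Y (r * (1 + Complex.I * τ)))
      (F' := fun τ r => Complex.I * (oscF ℓ a b q Y (r * (1 + Complex.I * τ)) +
          oscG ℓ a b q Y (r * (1 + Complex.I * τ))))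
      (x₀ := τ) (bound := fun r => M * Real.exp (-r))
      (Ioo_mem_nhds hτ.1 hτ.2)
      (Eventually.of_forall fun t =>
        (continuousOn_const.mul (hcF t)).aestronglyMeasurable measurableSet_Ioi)
      (hFint.const_mul _)
      ((continuousOn_const.mul ((hcF τ).add (hcG τ))).aestronglyMeasurable measurableSet_Ioi)
      ((ae_restrict_iff' measurableSet_Ioi).2 (ae_of_all _ fun r hr t ht => by
        rw [norm_mul, Complex.norm_I, one_mul]
        exact (norm_add_le _ _).trans (hFG r hr t (abs_le.2 ⟨ht.1.le, ht.2.le⟩))))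
      hint
      ((ae_restrict_iff' measurableSet_Ioi).2 (ae_of_all _ fun r hr t ht => hdτ r hr t))
    refine key.2.congr_deriv ?_
    have hD : ∀ r ∈ Ioi (0 : ℝ), HasDerivAt
        (fun r : ℝ => Complex.I * r * oscF ℓ a b q Y (r * (1 + Complex.I * τ)))
        (Complex.I * (oscF ℓ a b q Y (r * (1 + Complex.I * τ)) +
          oscG ℓ a b q Y (r * (1 + Complex.I * τ)))) r := by
      intro r hr
      have hr0 : (r : ℂ) ≠ 0 := by exact_mod_cast (ne_of_gt hr)
      have e0 : HasDerivAt (fun r : ℝ => (Complex.I * r : ℂ)) (Complex.I * 1) r :=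
        (Complex.ofRealCLM.hasDerivAt (x := r)).const_mul _
      refine (e0.mul (hdr r hr τ)).congr_deriv ?_
      field_simp
    have hbd : ∀ r : ℝ, 0 < r →
        ‖Complex.I * r * oscF ℓ a b q Y (r * (1 + Complex.I * τ))‖ ≤ r * (M * Real.exp (-r)) := by
      intro r hr
      rw [norm_mul, norm_mul, Complex.norm_I, one_mul, Complex.norm_real, Real.norm_of_nonneg hr.le]
      gcongr
      linarith [hFG r hr τ hτ', norm_nonneg (oscG ℓ a b q Y (r * (1 + Complex.I * τ)))]
    have hT : Tendsto (fun r : ℝ => r * (M * Real.exp (-r))) atTop (𝓝 0) := by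
      have := (Real.tendsto_pow_mul_exp_neg_atTop_nhds_zero 1).const_mul M
      simp only [pow_one, mul_zero] at this
      refine this.congr fun r => by ring
    have hL := integral_Ioi_of_hasDerivAt_of_tendsto (a := (0 : ℝ)) (m := (0 : ℂ)) ?_ hD key.1 ?_
    · rw [hL]; simp
    · rw [ContinuousWithinAt]
      simp only [Complex.ofReal_zero, mul_zero, zero_mul]
      refine squeeze_zero_norm' (a := fun r : ℝ => r * (M * Real.exp (-r))) ?_ ?_
      · filter_upwards [self_mem_nhdsWithin] with r hr
        rcases (mem_Ici.1 hr).eq_or_lt with h | h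
        · rw [← h]; simp
        · exact hbd r h
      · have : Continuous (fun r : ℝ => r * (M * Real.exp (-r))) := by fun_prop
        have := (this.tendsto 0).mono_left (nhdsWithin_le_nhds (s := Ici 0))
        simpa using this
    · refine squeeze_zero_norm' ?_ hT
      filter_upwards [eventually_gt_atTop 0] with r hr using hbd r hr
  have hconst := constant_of_has_deriv_right_zero (a := 0) (b := τ₀)
    (f := fun τ : ℝ => ∫ r in Ioi (0 : ℝ),
      (1 + Complex.I * τ) * oscF ℓ a b q Y (r * (1 + Complex.I * τ)))
    (fun t ht => (hderiv t ⟨by linarith [ht.1], by linarith [ht.2]⟩).continuousAt.continuousWithinAt)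
    (fun t ht => (hderiv t ⟨by linarith [ht.1], by linarith [ht.2]⟩).hasDerivWithinAt)
    τ₀ (right_mem_Icc.2 h0)
  rw [hconst]
  simp

lemma oscF_integrable (ℓ : ℕ) (a b : ℝ) (q : ℂ) (Y : ℝ) (hb : 0 < b) (hY0 : 0 < Y) (hY2 : Y < 2)
    (τ : ℝ) (hτ : |τ| ≤ 1 / 2) :
    IntegrableOn (fun r : ℝ => (1 + Complex.I * τ) * oscF ℓ a b q Y (r * (1 + Complex.I * τ)))
      (Ioi 0) := by
  obtain ⟨M, hM0, hM⟩ := oscF_bound ℓ a b q Y hb hY0 hY2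
  have hint : IntegrableOn (fun r : ℝ => M * Real.exp (-r)) (Ioi 0) :=
    (integrableOn_exp_neg_Ioi 0).const_mul M
  refine Integrable.const_mul ?_ _
  refine Integrable.mono' hint (ContinuousOn.aestronglyMeasurable ?_ measurableSet_Ioi) ?_
  · intro r hr
    have c1 : ContinuousAt (fun r : ℝ => (r : ℂ) * (1 + Complex.I * τ)) r := by fun_prop
    have := (oscF_hasDerivAt ℓ a b q Y (r * (1 + Complex.I * τ)) (by simpa using hr)).continuousAt
    exact (ContinuousAt.comp (f := fun r : ℝ => (r : ℂ) * (1 + Complex.I * τ)) this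
      c1).continuousWithinAt
  · refine (ae_restrict_iff' measurableSet_Ioi).2 (ae_of_all _ fun r hr => ?_)
    have := (oscG_norm_le ℓ a b q Y hb hY0 _).trans (hM r hr τ hτ _ rfl)
    linarith [norm_nonneg (oscG ℓ a b q Y (r * (1 + Complex.I * τ)))]

lemma norm_exp_sub_one_le_of_re_nonpos (z : ℂ) (hz : z.re ≤ 0) :
    ‖Complex.exp z - 1‖ ≤ 2 * ‖z‖ := by
  rcases le_total ‖z‖ 1 with h | h
  · exact Complex.norm_exp_sub_one_le h
  · have h1 : ‖Complex.exp z‖ ≤ 1 := by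
      rw [Complex.norm_exp]; exact Real.exp_le_one_iff.2 hz
    calc ‖Complex.exp z - 1‖ ≤ ‖Complex.exp z‖ + ‖(1 : ℂ)‖ := norm_sub_le _ _
      _ ≤ 1 + 1 := by rw [norm_one]; gcongr
      _ ≤ 2 * ‖z‖ := by linarith

lemma diff_bound (ℓ : ℕ) (Y : ℝ) (κ : ℂ) (hY0 : 0 < Y) (hY2 : Y < 2) (τ : ℝ) (hτ0 : 0 < τ)
    (hτ1 : τ ≤ 1 / 4) (hκ : (κ * (1 + Complex.I * τ) ^ (Y : ℂ)).re ≤ 0) :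
    ∃ C : ℝ, 0 ≤ C ∧ ∀ a b h : ℝ, 0 < a → 0 < b → 0 < h →
      ‖∫ r in Ioi (0 : ℝ), (oscF ℓ a b (h * κ) Y r - oscF ℓ a b 0 Y r)‖
        ≤ C * (h * a ^ (-Y - (ℓ : ℝ) - 1)) := by
  set w : ℂ := 1 + Complex.I * τ with hw
  have hp : 0 < (ℓ : ℝ) + Y + 1 := by positivity
  refine ⟨2 * ‖w‖ * ‖w‖ ^ ℓ * ‖w‖ ^ Y * ‖κ‖ * (τ ^ (-Y - (ℓ : ℝ) - 1) *
    Real.Gamma (ℓ + Y + 1)), by have := (Real.Gamma_pos_of_pos hp).le; positivity, ?_⟩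
  intro a b h ha hb hh
  have hτ : |τ| ≤ 1 / 2 := by rw [abs_of_pos hτ0]; linarith
  have hw0 : w ≠ 0 := by
    intro h0
    have : w.re = 1 := by simp [hw]
    rw [h0] at this; simp at this
  have i0 : ∀ q : ℂ, IntegrableOn (fun r : ℝ => oscF ℓ a b q Y r) (Ioi 0) := by
    intro q
    have := oscF_integrable ℓ a b q Y hb hY0 hY2 0 (by simp)
    simpa using this
  have i1 : ∀ q : ℂ, IntegrableOn (fun r : ℝ => w * oscF ℓ a b q Y (r * w)) (Ioi 0) :=
    fun q => oscF_integrable ℓ a b q Y hb hY0 hY2 τ hτ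
  rw [integral_sub (i0 _) (i0 _), oscF_rot ℓ a b _ Y hb hY0 hY2 τ hτ0.le hτ1,
    oscF_rot ℓ a b 0 Y hb hY0 hY2 τ hτ0.le hτ1, ← hw, ← integral_sub (i1 _) (i1 _)]
  have hI := Real.integral_rpow_mul_exp_neg_mul_Ioi hp (mul_pos ha hτ0)
  have hgi : IntegrableOn (fun r : ℝ => r ^ ((ℓ : ℝ) + Y) * Real.exp (-(a * τ) * r)) (Ioi 0) := by
    have := integrableOn_rpow_mul_exp_neg_mul_rpow (p := 1) (s := (ℓ : ℝ) + Y) (b := a * τ)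
      (by linarith) one_pos (mul_pos ha hτ0)
    simpa using this
  have hle : ‖∫ r in Ioi (0 : ℝ), (w * oscF ℓ a b (h * κ) Y (r * w) - w * oscF ℓ a b 0 Y (r * w))‖
      ≤ ∫ r in Ioi (0 : ℝ), (2 * ‖w‖ * ‖w‖ ^ ℓ * ‖w‖ ^ Y * ‖κ‖ * h) *
        (r ^ ((ℓ : ℝ) + Y) * Real.exp (-(a * τ) * r)) := by
    refine norm_integral_le_of_norm_le (hgi.const_mul _) ?_
    refine (ae_restrict_iff' measurableSet_Ioi).2 (ae_of_all _ fun r hr => ?_)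
    have hr' : 0 < r := hr
    have hcp : ((r : ℂ) * w) ^ (Y : ℂ) = ((r ^ Y : ℝ) : ℂ) * w ^ (Y : ℂ) := by
      have hr0 : (r : ℂ) ≠ 0 := by exact_mod_cast hr'.ne'
      rw [Complex.cpow_def_of_ne_zero (mul_ne_zero hr0 hw0), Complex.cpow_def_of_ne_zero hw0,
        Complex.ofReal_cpow hr'.le, Complex.cpow_def_of_ne_zero hr0, Complex.log_ofReal_mul hr' hw0,
        ← Complex.exp_add, Complex.ofReal_log hr'.le]
      ring_nf
    have hdiff : w * oscF ℓ a b (h * κ) Y (r * w) - w * oscF ℓ a b 0 Y (r * w) =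
        w * (r * w) ^ ℓ * Complex.exp (Complex.I * a * (r * w) - b * (r * w) ^ 2 / 2) *
          (Complex.exp (h * κ * ((r * w) ^ (Y : ℂ))) - 1) := by
      simp only [oscF, zero_mul, add_zero, Complex.exp_add]; ring
    have hE : ‖Complex.exp (Complex.I * a * (r * w) - b * (r * w) ^ 2 / 2)‖
        ≤ Real.exp (-(a * τ) * r) := by
      rw [Complex.norm_exp]
      have : (Complex.I * a * (r * w) - b * (r * w) ^ 2 / 2 : ℂ) =
          ((-(a * τ) * r - b * r ^ 2 * (1 - τ ^ 2) / 2 : ℝ) : ℂ)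
            + ((a * r - b * r ^ 2 * τ : ℝ) : ℂ) * Complex.I := by
        rw [hw]; push_cast
        linear_combination (a * r * τ - b * r ^ 2 * τ ^ 2 / 2 : ℂ) * Complex.I_sq
      rw [this, Complex.add_re, Complex.ofReal_re, Complex.re_ofReal_mul, Complex.I_re]
      gcongr
      have : 0 ≤ b * r ^ 2 * (1 - τ ^ 2) / 2 := by
        have : 0 ≤ 1 - τ ^ 2 := by nlinarith
        positivity
      linarith
    have hQ : ‖Complex.exp (h * κ * ((r * w) ^ (Y : ℂ))) - 1‖ ≤ 2 * (h * ‖κ‖ * (r ^ Y * ‖w‖ ^ Y)) := by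
      refine (norm_exp_sub_one_le_of_re_nonpos _ ?_).trans (le_of_eq ?_)
      · rw [hcp]
        have : (h * κ * (((r ^ Y : ℝ) : ℂ) * w ^ (Y : ℂ))) =
            ((h * r ^ Y : ℝ) : ℂ) * (κ * w ^ (Y : ℂ)) := by push_cast; ring
        rw [this, Complex.re_ofReal_mul]
        exact mul_nonpos_of_nonneg_of_nonpos (by positivity) hκ
      · rw [norm_mul, norm_mul, Complex.norm_real, Complex.norm_cpow_real, norm_mul,
          Complex.norm_real, Real.norm_of_nonneg hr'.le, Real.norm_of_nonneg hh.le,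
          Real.mul_rpow hr'.le (norm_nonneg _)]
    rw [hdiff, norm_mul, norm_mul, norm_mul, norm_pow, norm_mul, Complex.norm_real,
      Real.norm_of_nonneg hr'.le]
    calc _ ≤ ‖w‖ * (r * ‖w‖) ^ ℓ * Real.exp (-(a * τ) * r) * (2 * (h * ‖κ‖ * (r ^ Y * ‖w‖ ^ Y))) := by
          gcongr
      _ = _ := by
          rw [Real.rpow_add hr', Real.rpow_natCast, mul_pow]; ring
  refine hle.trans (le_of_eq ?_)
  rw [integral_const_mul]
  have e1 : ∫ r in Ioi (0 : ℝ), r ^ ((ℓ : ℝ) + Y) * Real.exp (-(a * τ) * r) =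
      (a * τ) ^ (-Y - (ℓ : ℝ) - 1) * Real.Gamma (ℓ + Y + 1) := by
    rw [one_div, Real.inv_rpow (mul_pos ha hτ0).le, ← Real.rpow_neg (mul_pos ha hτ0).le] at hI
    rw [show -Y - (ℓ : ℝ) - 1 = -((ℓ : ℝ) + Y + 1) by ring, ← hI]
    refine setIntegral_congr_fun measurableSet_Ioi fun r hr => ?_
    ring_nf
  rw [e1, Real.mul_rpow ha.le hτ0.le]
  ring

/-- Gaussian integrand. -/
def gaussT (ℓ : ℕ) (a b : ℝ) (u : ℝ) : ℂ :=
  (u : ℂ) ^ ℓ * Complex.exp (Complex.I * a * u - b * (u : ℂ) ^ 2 / 2)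

lemma gaussT_norm (ℓ : ℕ) (a b : ℝ) (u : ℝ) :
    ‖gaussT ℓ a b u‖ = ‖u ^ (ℓ : ℝ) * Real.exp (-(b / 2) * u ^ 2)‖ := by
  have : (Complex.I * a * u - b * (u : ℂ) ^ 2 / 2) = ((-(b / 2) * u ^ 2 : ℝ) : ℂ)
      + ((a * u : ℝ) : ℂ) * Complex.I := by push_cast; ring
  rw [gaussT, this, norm_mul, Complex.norm_exp, Complex.add_re, Complex.ofReal_re,
    Complex.re_ofReal_mul, Complex.I_re, norm_mul, norm_pow, Real.rpow_natCast, norm_pow,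
    Complex.norm_real, Real.norm_of_nonneg (Real.exp_pos _).le]
  simp

lemma gaussT_cont (ℓ : ℕ) (a b : ℝ) : Continuous (gaussT ℓ a b) := by
  unfold gaussT; fun_prop

lemma gaussT_integrable (ℓ : ℕ) (a b : ℝ) (hb : 0 < b) : Integrable (gaussT ℓ a b) := by
  have h1 := (integrable_rpow_mul_exp_neg_mul_sq (show 0 < b / 2 by positivity)
    (s := (ℓ : ℝ)) (by have : (0 : ℝ) ≤ ℓ := by positivity
                       linarith))
  exact h1.mono (gaussT_cont ℓ a b).aestronglyMeasurable
    (ae_of_all _ fun u => (gaussT_norm ℓ a b u).le)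

lemma gauss_rec (ℓ : ℕ) (a b : ℝ) (hb : 0 < b) :
    (b : ℂ) * ∫ u, gaussT (ℓ + 1) a b u =
      Complex.I * a * (∫ u, gaussT ℓ a b u) + ℓ * ∫ u, gaussT (ℓ - 1) a b u := by
  have hd : ∀ u : ℝ, HasDerivAt (gaussT ℓ a b)
      (Complex.I * a * gaussT ℓ a b u + ℓ * gaussT (ℓ - 1) a b u - b * gaussT (ℓ + 1) a b u) u := by
    intro u
    have h0 : HasDerivAt (fun u : ℝ => (u : ℂ)) 1 u := Complex.ofRealCLM.hasDerivAt (x := u)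
    have h1 := h0.pow ℓ
    have h2 : HasDerivAt (fun u : ℝ => Complex.I * a * u - b * (u : ℂ) ^ 2 / 2)
        (Complex.I * a - b * u) u := by
      have := (h0.const_mul (Complex.I * (a:ℂ))).sub (((h0.pow 2).const_mul (b : ℂ)).div_const 2)
      refine this.congr_deriv ?_
      push_cast; ring
    refine (h1.mul h2.cexp).congr_deriv ?_
    simp only [gaussT, Pi.pow_apply]
    ring
  have i0 := gaussT_integrable ℓ a b hb
  have i1 := gaussT_integrable (ℓ - 1) a b hb
  have i2 := gaussT_integrable (ℓ + 1) a b hb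
  have j0 := i0.const_mul (Complex.I * (a:ℂ))
  have j1 := i1.const_mul (ℓ : ℂ)
  have j2 := i2.const_mul (b : ℂ)
  have := integral_eq_zero_of_hasDerivAt_of_integrable hd ((j0.add j1).sub j2) i0
  have j3 : Integrable (fun u => Complex.I * a * gaussT ℓ a b u + ℓ * gaussT (ℓ - 1) a b u) :=
    j0.add j1
  rw [integral_sub j3 j2, integral_add j0 j1, integral_const_mul, integral_const_mul, integral_const_mul] at this
  linear_combination -this

lemma gauss_bound_aux (ℓ : ℕ) : ∃ K : ℝ, 0 ≤ K ∧ ∀ a b : ℝ, 0 < a → 0 < b → b ≤ a ^ 2 →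
    ‖∫ u, gaussT ℓ a b u‖ ≤ K * (a / b) ^ ℓ * ‖∫ u, gaussT 0 a b u‖ := by
  induction ℓ using Nat.strong_induction_on with
  | _ n ih =>
    rcases n with _ | n
    · exact ⟨1, by simp, fun a b _ _ _ => by simp⟩
    · obtain ⟨K, hK0, hK⟩ := ih n (by omega)
      obtain ⟨K', hK0', hK'⟩ := ih (n - 1) (by omega)
      refine ⟨K + n * K', by positivity, fun a b ha hb hab => ?_⟩
      have h1 := hK a b ha hb hab
      have h2 := hK' a b ha hb hab
      set g := ‖∫ u, gaussT 0 a b u‖ with hg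
      have hg0 : 0 ≤ g := norm_nonneg _
      have h3 : b * ‖∫ u, gaussT (n + 1) a b u‖ ≤
          a * ‖∫ u, gaussT n a b u‖ + n * ‖∫ u, gaussT (n - 1) a b u‖ := by
        have := congrArg norm (gauss_rec n a b hb)
        rw [norm_mul, Complex.norm_real, Real.norm_of_nonneg hb.le] at this
        rw [this]
        refine (norm_add_le _ _).trans (le_of_eq ?_)
        simp [abs_of_pos ha]
      have h4 : (n : ℝ) * (a / b) ^ (n - 1) ≤ n * (b * (a / b) ^ (n + 1)) := by
        rcases n with _ | m
        · simp
        · simp only [Nat.add_sub_cancel]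
          have : (a / b) ^ (m + 1 + 1) = (a / b) ^ m * (a ^ 2 / b ^ 2) := by
            rw [← div_pow, ← pow_add]
          rw [this]
          have : (a / b) ^ m * 1 ≤ (a / b) ^ m * (b * (a ^ 2 / b ^ 2)) := by
            gcongr
            rw [show b * (a ^ 2 / b ^ 2) = a ^ 2 / b by field_simp]
            rwa [one_le_div hb]
          have : (a / b) ^ m ≤ b * ((a / b) ^ m * (a ^ 2 / b ^ 2)) := by linarith
          gcongr
      have h5 : a * (a / b) ^ n = b * (a / b) ^ (n + 1) := by
        rw [pow_succ]; field_simp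
      refine le_of_mul_le_mul_left (h3.trans ?_) hb
      calc _ ≤ a * (K * (a / b) ^ n * g) + n * (K' * (a / b) ^ (n - 1) * g) := by gcongr
        _ = K * g * (a * (a / b) ^ n) + K' * g * (n * (a / b) ^ (n - 1)) := by ring
        _ ≤ K * g * (a * (a / b) ^ n) + K' * g * (n * (b * (a / b) ^ (n + 1))) := by gcongr
        _ = _ := by rw [h5]; ring

lemma gauss_zero (a b : ℝ) (hb : 0 < b) :
    ‖∫ u, gaussT 0 a b u‖ = (2 * π / b) ^ (1 / 2 : ℝ) * Real.exp (-a ^ 2 / (2 * b)) := by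
  have h := fourierIntegral_gaussian (b := ((b / 2 : ℝ) : ℂ))
    (by rw [Complex.ofReal_re]; positivity) (a : ℂ)
  have e : ∀ u : ℝ, gaussT 0 a b u =
      Complex.exp (Complex.I * a * u) * Complex.exp (-((b / 2 : ℝ) : ℂ) * (u : ℂ) ^ 2) := by
    intro u
    rw [gaussT, ← Complex.exp_add]
    push_cast
    rw [pow_zero, one_mul]; congr 1; ring
  simp_rw [e]
  rw [h, norm_mul]
  congr 1
  · rw [show (1 / 2 : ℂ) = ((1 / 2 : ℝ) : ℂ) by push_cast; rfl, Complex.norm_cpow_real,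
      ← Complex.ofReal_div, Complex.norm_real, Real.norm_of_nonneg (by positivity)]
    congr 1; field_simp
  · rw [show (-(a : ℂ) ^ 2 / (4 * ((b / 2 : ℝ) : ℂ))) = ((-a ^ 2 / (2 * b) : ℝ) : ℂ) by
      push_cast; field_simp; ring, Complex.norm_exp, Complex.ofReal_re]

lemma c1_neg (Y Cp Cm : ℝ) (hY1 : 1 < Y) (hY2 : Y < 2) (hCp : 0 < Cp) (hCm : 0 < Cm) :
    (Cp + Cm) * Real.cos (π * Y / 2) * Real.Gamma (-Y) < 0 := by
  have hpi := Real.pi_pos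
  have h1 : Real.cos (π * Y / 2) < 0 :=
    Real.cos_neg_of_pi_div_two_lt_of_lt (by nlinarith) (by nlinarith)
  have h2 : 0 < Real.Gamma (-Y) := by
    have g1 := Real.Gamma_add_one (s := -Y) (by linarith)
    have g2 := Real.Gamma_add_one (s := -Y + 1) (by linarith)
    have g3 := Real.Gamma_pos_of_pos (s := -Y + 1 + 1) (by linarith)
    rw [g2, g1] at g3
    have : 0 < (Y * (Y - 1)) * Real.Gamma (-Y) := by nlinarith
    exact (mul_pos_iff_of_pos_left (by nlinarith)).1 this
  have : (Cp + Cm) * Real.cos (π * Y / 2) < 0 := mul_neg_of_pos_of_neg (by linarith) h1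
  exact mul_neg_of_neg_of_pos this h2

/-- The integrand of the statement, in normalized form. -/
def fullT (ℓ : ℕ) (a b h Y c₁ d : ℝ) (u : ℝ) : ℂ :=
  (u : ℂ) ^ ℓ * Complex.exp (Complex.I * a * u - b * (u : ℂ) ^ 2 / 2
    + (|u| ^ Y * h : ℝ) * (c₁ - Complex.I * d * Real.sign u))

lemma fullT_eq (ℓ : ℕ) (a b h Y c₁ d : ℝ) (u : ℝ) :
    fullT ℓ a b h Y c₁ d u = gaussT ℓ a b u *
      Complex.exp ((|u| ^ Y * h : ℝ) * (c₁ - Complex.I * d * Real.sign u)) := by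
  rw [fullT, gaussT, Complex.exp_add]; ring

lemma fullT_neg (ℓ : ℕ) (a b h Y c₁ d : ℝ) (u : ℝ) :
    fullT ℓ a b h Y c₁ d (-u) = (-1) ^ ℓ * (starRingEnd ℂ) (fullT ℓ a b h Y c₁ d u) := by
  simp only [fullT, map_mul, map_pow, Complex.conj_ofReal, ← Complex.exp_conj, map_add, map_sub,
    Complex.conj_I, abs_neg, Real.sign_neg, map_div₀, Complex.conj_ofNat]
  rw [← mul_assoc, ← mul_pow]
  push_cast
  congr 2
  · ring
  · ring

lemma gaussT_eq_fullT (ℓ : ℕ) (a b Y : ℝ) (u : ℝ) :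
    gaussT ℓ a b u = fullT ℓ a b 0 Y 0 0 u := by
  simp [gaussT, fullT]

lemma fullT_pos (ℓ : ℕ) (a b h Y c₁ d : ℝ) (u : ℝ) (hu : 0 < u) :
    fullT ℓ a b h Y c₁ d u = oscF ℓ a b (h * (c₁ - Complex.I * d)) Y u := by
  rw [fullT, oscF, abs_of_pos hu, Real.sign_of_pos hu, Complex.ofReal_mul,
    Complex.ofReal_cpow hu.le]
  push_cast
  congr 2
  ring

lemma fullT_integrable (ℓ : ℕ) (a b h Y c₁ d : ℝ) (hb : 0 < b) (hh : 0 ≤ h) (hc : c₁ ≤ 0) :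
    Integrable (fullT ℓ a b h Y c₁ d) := by
  have hs : Measurable Real.sign := by
    unfold Real.sign
    exact Measurable.ite measurableSet_Iio measurable_const
      (Measurable.ite measurableSet_Ioi measurable_const measurable_const)
  refine (gaussT_integrable ℓ a b hb).mono ?_ (ae_of_all _ fun u => ?_)
  · refine Measurable.aestronglyMeasurable ?_
    unfold fullT
    fun_prop
  · rw [fullT_eq, norm_mul, Complex.norm_exp]
    refine mul_le_of_le_one_right (norm_nonneg _) (Real.exp_le_one_iff.2 ?_)
    rw [Complex.re_ofReal_mul]
    have : (c₁ - Complex.I * d * Real.sign u : ℂ).re = c₁ := by simp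
    rw [this]
    exact mul_nonpos_of_nonneg_of_nonpos (by positivity) hc

lemma diff_full (ℓ : ℕ) (a b h Y c₁ d : ℝ) (hb : 0 < b) (hh : 0 ≤ h) (hc : c₁ ≤ 0) :
    ‖(∫ u, fullT ℓ a b h Y c₁ d u) - ∫ u, gaussT ℓ a b u‖ ≤
      2 * ‖∫ r in Ioi (0 : ℝ), (oscF ℓ a b (h * (c₁ - Complex.I * d)) Y r - oscF ℓ a b 0 Y r)‖ := by
  have i1 := fullT_integrable ℓ a b h Y c₁ d hb hh hc
  have i2 := gaussT_integrable ℓ a b hb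
  set D : ℝ → ℂ := fun u => fullT ℓ a b h Y c₁ d u - gaussT ℓ a b u with hD
  have iD : Integrable D := i1.sub i2
  have hDneg : ∀ u, D (-u) = (-1) ^ ℓ * (starRingEnd ℂ) (D u) := by
    intro u
    simp only [hD, gaussT_eq_fullT ℓ a b Y, fullT_neg, map_sub]; ring
  have hpos : ∫ r in Ioi (0 : ℝ), D r =
      ∫ r in Ioi (0 : ℝ), (oscF ℓ a b (h * (c₁ - Complex.I * d)) Y r - oscF ℓ a b 0 Y r) := by
    refine setIntegral_congr_fun measurableSet_Ioi fun r hr => ?_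
    simp only [hD, fullT_pos ℓ a b h Y c₁ d r hr, gaussT, oscF, zero_mul, add_zero]
  have hneg : ∫ r in Iic (0 : ℝ), D r = (-1) ^ ℓ * (starRingEnd ℂ) (∫ r in Ioi (0 : ℝ), D r) := by
    have := integral_comp_neg_Ioi (0 : ℝ) D
    rw [neg_zero] at this
    rw [← this, ← integral_conj, ← integral_const_mul]
    simp_rw [hDneg]
  rw [← integral_sub i1 i2]
  change ‖∫ u, D u‖ ≤ _
  rw [← intervalIntegral.integral_Iic_add_Ioi (b := (0 : ℝ)) iD.integrableOn iD.integrableOn, hneg, ← hpos]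
  refine (norm_add_le _ _).trans (le_of_eq ?_)
  rw [norm_mul, norm_pow, norm_neg, norm_one, one_pow, one_mul, RCLike.norm_conj]
  ring

/-- key estimate in Lemma C.2: asymptotics of the oscillatory integral
`I(ℓ) = ∫ u^ℓ exp(iu(ε ± γ₀h) − σ²u²h/2 + |u|^Y h (c₁ ∓ ic₂ sgn u)) du`. -/
theorem oscillatory_integral_estimate
    (Y Cp Cm σ : ℝ)
    (hY1 : 1 < Y) (hY2 : Y < 2) (hCp : 0 < Cp) (hCm : 0 < Cm) (hσ : 0 < σ)
    (γ₀ : ℝ) (ℓ : ℕ)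
    (c₁ c₂ : ℝ)
    (hc₁ : c₁ = (Cp + Cm) * Real.cos (π * Y / 2) * Real.Gamma (-Y))
    (hc₂ : c₂ = (Cm - Cp) * Real.sin (π * Y / 2) * Real.Gamma (-Y))
    -- the threshold `ε = ε(h)`
    (ε : ℝ → ℝ) (hεpos : ∀ h : ℝ, 0 < h → 0 < ε h)
    (hε0 : Tendsto ε (𝓝[>] (0 : ℝ)) (𝓝 0))
    (hεsqrt : Tendsto (fun h => ε h / Real.sqrt h) (𝓝[>] (0 : ℝ)) atTop) :
    ∀ s : ℝ, s = 1 ∨ s = -1 →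
      (∀ h : ℝ, 0 < h →
        Integrable (fun u : ℝ =>
          (u : ℂ) ^ ℓ * Complex.exp (Complex.I * u * (ε h + s * γ₀ * h)
            - σ ^ 2 * u ^ 2 * h / 2
            + (|u| ^ Y * h : ℝ) * (c₁ - s * Complex.I * c₂ * Real.sign u)))) ∧
      ∃ R₁ R₂ : ℝ → ℂ,
        (∀ h : ℝ, 0 < h →
          (∫ u : ℝ, (u : ℂ) ^ ℓ * Complex.exp (Complex.I * u * (ε h + s * γ₀ * h)
              - σ ^ 2 * u ^ 2 * h / 2
              + (|u| ^ Y * h : ℝ) * (c₁ - s * Complex.I * c₂ * Real.sign u)))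
            = R₁ h + R₂ h) ∧
        R₁ =O[𝓝[>] (0 : ℝ)] (fun h => h * ε h ^ (-Y - (ℓ : ℝ) - 1)) ∧
        R₂ =O[𝓝[>] (0 : ℝ)]
          (fun h => h ^ (-(ℓ : ℝ) - 1 / 2) * ε h ^ ℓ *
            Real.exp (-(ε h ^ 2) / (2 * σ ^ 2 * h))) := by
  intro s hs
  have hc1 : c₁ < 0 := hc₁ ▸ c1_neg Y Cp Cm hY1 hY2 hCp hCm
  have hY0 : 0 < Y := by linarith
  have hT : ∀ h : ℝ, (fun u : ℝ =>
          (u : ℂ) ^ ℓ * Complex.exp (Complex.I * u * (ε h + s * γ₀ * h)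
            - σ ^ 2 * u ^ 2 * h / 2
            + (|u| ^ Y * h : ℝ) * (c₁ - s * Complex.I * c₂ * Real.sign u))) =
      fullT ℓ (ε h + s * γ₀ * h) (σ ^ 2 * h) h Y c₁ (s * c₂) := by
    intro h
    funext u
    rw [fullT]
    push_cast
    congr 2
    ring
  have hbpos : ∀ h : ℝ, 0 < h → 0 < σ ^ 2 * h := fun h hh => by positivity
  -- choice of the rotation angle
  obtain ⟨τ, hτ0, hτ1, hκ⟩ : ∃ τ : ℝ, 0 < τ ∧ τ ≤ 1 / 4 ∧
      (((c₁ - Complex.I * (s * c₂ : ℝ) : ℂ)) * (1 + Complex.I * τ) ^ (Y : ℂ)).re ≤ 0 := by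
    have hcont : ContinuousAt (fun τ : ℝ => (((c₁ - Complex.I * (s * c₂ : ℝ) : ℂ)) *
        (1 + Complex.I * τ) ^ (Y : ℂ)).re) 0 := by
      have c1 : ContinuousAt (fun τ : ℝ => (1 + Complex.I * τ : ℂ)) 0 := by fun_prop
      have c2 : ContinuousAt (fun τ : ℝ => (1 + Complex.I * τ : ℂ) ^ (Y : ℂ)) 0 :=
        c1.cpow continuousAt_const (Or.inl (by simp))
      exact Complex.continuous_re.continuousAt.comp (continuousAt_const.mul c2)
    have h0 : (((c₁ - Complex.I * (s * c₂ : ℝ) : ℂ)) *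
        (1 + Complex.I * (0 : ℝ)) ^ (Y : ℂ)).re < 0 := by
      simpa using hc1
    have he := (hcont.eventually_lt continuousAt_const h0).filter_mono
      (nhdsWithin_le_nhds (s := Ioi 0))
    have he2 : ∀ᶠ τ : ℝ in 𝓝[>] 0, τ ≤ 1 / 4 :=
      (eventually_le_nhds (show (0:ℝ) < 1 / 4 by norm_num)).filter_mono nhdsWithin_le_nhds
    obtain ⟨τ, h1, h2, h3⟩ := (he.and (he2.and self_mem_nhdsWithin)).exists
    exact ⟨τ, h3, h2, le_of_lt h1⟩
  obtain ⟨C, hC0, hC⟩ := diff_bound ℓ Y _ hY0 hY2 τ hτ0 hτ1 hκ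
  obtain ⟨K, hK0, hK⟩ := gauss_bound_aux ℓ
  have hs1 : |s| = 1 := by rcases hs with rfl | rfl <;> simp
  -- eventual facts
  have ev : ∀ᶠ h : ℝ in 𝓝[>] 0, 0 < h ∧ ε h / 2 ≤ ε h + s * γ₀ * h ∧
      ε h + s * γ₀ * h ≤ 2 * ε h ∧ σ ^ 2 * h ≤ (ε h + s * γ₀ * h) ^ 2 ∧ ε h ≤ 1 := by
    have e1 : ∀ᶠ h : ℝ in 𝓝[>] 0, |γ₀| * Real.sqrt h ≤ 1 / 2 := by
      have : ContinuousAt (fun h : ℝ => |γ₀| * Real.sqrt h) 0 := by fun_prop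
      have h2 := this.eventually_lt (continuousAt_const (y := (1 / 2 : ℝ))) (by simp)
      exact (h2.filter_mono (nhdsWithin_le_nhds (s := Ioi 0))).mono fun _ h => h.le
    filter_upwards [self_mem_nhdsWithin, e1, hεsqrt.eventually_ge_atTop (max 1 (2 * σ)),
      hε0.eventually (eventually_le_nhds one_pos)] with h hh e1 e2 e3
    have hh : 0 < h := hh
    have hsq : 0 < Real.sqrt h := Real.sqrt_pos.2 hh
    rw [le_div_iff₀ hsq] at e2
    have hss : Real.sqrt h * Real.sqrt h = h := Real.mul_self_sqrt hh.le
    have f1 : Real.sqrt h ≤ ε h := by nlinarith [le_max_left 1 (2 * σ)]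
    have f2 : 2 * σ * Real.sqrt h ≤ ε h := by nlinarith [le_max_right 1 (2 * σ)]
    have f3 : |s * γ₀ * h| ≤ ε h / 2 := by
      rw [abs_mul, abs_mul, hs1, one_mul, abs_of_pos hh]
      nlinarith
    have f4 := abs_le.1 f3
    have f5 := hεpos h hh
    refine ⟨hh, by linarith, by linarith, ?_, e3⟩
    have f6 : (ε h / 2) ^ 2 ≤ (ε h + s * γ₀ * h) ^ 2 := by
      gcongr; linarith
    have f7 : (σ * Real.sqrt h) ^ 2 ≤ (ε h / 2) ^ 2 := by
      gcongr; linarith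
    rw [mul_pow, Real.sq_sqrt hh.le] at f7
    linarith
  refine ⟨fun h hh => ?_, fun h => (∫ u, fullT ℓ (ε h + s * γ₀ * h) (σ ^ 2 * h) h Y c₁ (s * c₂) u)
      - ∫ u, gaussT ℓ (ε h + s * γ₀ * h) (σ ^ 2 * h) u,
    fun h => ∫ u, gaussT ℓ (ε h + s * γ₀ * h) (σ ^ 2 * h) u, fun h hh => ?_, ?_, ?_⟩
  · rw [hT h]
    exact fullT_integrable _ _ _ _ _ _ _ (hbpos h hh) hh.le hc1.le
  · rw [hT h]; ring
  · refine IsBigO.of_bound (2 * (C * (1 / 2) ^ (-Y - (ℓ : ℝ) - 1))) ?_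
    filter_upwards [ev] with h ⟨hh, h1, h2, h3, h4⟩
    have hε := hεpos h hh
    have ha : 0 < ε h + s * γ₀ * h := by linarith
    refine (diff_full ℓ _ _ h Y c₁ (s * c₂) (hbpos h hh) hh.le hc1.le).trans ?_
    rw [Real.norm_of_nonneg (by positivity)]
    have := hC _ _ h ha (hbpos h hh) hh
    have h5 : (ε h + s * γ₀ * h) ^ (-Y - (ℓ : ℝ) - 1) ≤
        (1 / 2) ^ (-Y - (ℓ : ℝ) - 1) * ε h ^ (-Y - (ℓ : ℝ) - 1) := by
      rw [← Real.mul_rpow (by norm_num) hε.le]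
      refine Real.rpow_le_rpow_of_nonpos (by positivity) (by linarith) ?_
      have : (0 : ℝ) ≤ ℓ := by positivity
      linarith
    calc _ ≤ 2 * (C * (h * (ε h + s * γ₀ * h) ^ (-Y - (ℓ : ℝ) - 1))) := by gcongr
      _ ≤ 2 * (C * (h * ((1 / 2) ^ (-Y - (ℓ : ℝ) - 1) * ε h ^ (-Y - (ℓ : ℝ) - 1)))) := by gcongr
      _ = _ := by ring
  · refine IsBigO.of_bound (K * (2 / σ ^ 2) ^ ℓ * (2 * π / σ ^ 2) ^ (1 / 2 : ℝ) *
      Real.exp (|γ₀| / σ ^ 2)) ?_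
    filter_upwards [ev] with h ⟨hh, h1, h2, h3, h4⟩
    have hε := hεpos h hh
    have ha : 0 < ε h + s * γ₀ * h := by linarith
    refine (hK _ _ ha (hbpos h hh) h3).trans ?_
    rw [Real.norm_of_nonneg (by positivity), gauss_zero _ _ (hbpos h hh)]
    have g1 : ((ε h + s * γ₀ * h) / (σ ^ 2 * h)) ^ ℓ ≤
        (2 / σ ^ 2) ^ ℓ * (ε h ^ ℓ * h ^ (-(ℓ : ℝ))) := by
      rw [Real.rpow_neg hh.le, Real.rpow_natCast, ← inv_pow, ← mul_pow, ← mul_pow]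
      gcongr
      rw [show 2 / σ ^ 2 * (ε h * h⁻¹) = (2 * ε h) / (σ ^ 2 * h) by field_simp]
      gcongr
    have g2 : (2 * π / (σ ^ 2 * h)) ^ (1 / 2 : ℝ) =
        (2 * π / σ ^ 2) ^ (1 / 2 : ℝ) * h ^ (-(1 / 2) : ℝ) := by
      rw [Real.rpow_neg hh.le, ← Real.inv_rpow hh.le, ← Real.mul_rpow (by positivity) (by positivity)]
      congr 1; field_simp
    have g3 : Real.exp (-(ε h + s * γ₀ * h) ^ 2 / (2 * (σ ^ 2 * h))) ≤
        Real.exp (|γ₀| / σ ^ 2) * Real.exp (-(ε h ^ 2) / (2 * σ ^ 2 * h)) := by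
      rw [← Real.exp_add]
      gcongr
      rw [show |γ₀| / σ ^ 2 + -(ε h ^ 2) / (2 * σ ^ 2 * h) =
        (2 * |γ₀| * h - ε h ^ 2) / (2 * (σ ^ 2 * h)) by field_simp; ring]
      gcongr
      have k1 : -|γ₀| ≤ s * γ₀ := by
        have := neg_abs_le (s * γ₀)
        rwa [abs_mul, hs1, one_mul] at this
      have k2 : -(|γ₀| * h) ≤ s * γ₀ * h * ε h := by
        have m1 : -|γ₀| * (h * ε h) ≤ s * γ₀ * (h * ε h) := by gcongr
        have m2 : |γ₀| * (h * ε h) ≤ |γ₀| * (h * 1) := by gcongr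
        linarith
      nlinarith [sq_nonneg (s * γ₀ * h)]
    have g4 : h ^ (-(ℓ : ℝ) - 1 / 2) = h ^ (-(ℓ : ℝ)) * h ^ (-(1 / 2) : ℝ) := by
      rw [← Real.rpow_add hh]; ring_nf
    calc _ ≤ K * ((2 / σ ^ 2) ^ ℓ * (ε h ^ ℓ * h ^ (-(ℓ : ℝ)))) *
          (((2 * π / σ ^ 2) ^ (1 / 2 : ℝ) * h ^ (-(1 / 2) : ℝ)) *
          (Real.exp (|γ₀| / σ ^ 2) * Real.exp (-(ε h ^ 2) / (2 * σ ^ 2 * h)))) := by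
          rw [g2]; gcongr
      _ = _ := by rw [g4]; ring

end
end

section
/- Fix a positive integer k. Then, as h → 0 with ε = ε(h) → 0 and ε(h)/√h → ∞, one has E( W_h^{2k}·1_{|σW_h + J_h| ≤ ε} ) = (2k−1)!!·h^k + O(h²·ε^{2k−Y−2}) + o(h^{k+1/Y}) + O(h^{1/2}·ε^{2k−1}·e^{−ε²/(2σ²h)}), where (2k−1)!! denotes the double factorial and the remainder decomposes as a sum of functions with the indicated big-O/little-o rates. -/
open MeasureTheory ProbabilityTheory Filter Asymptotics Set
open scoped Topology NNReal ENNReal Real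

noncomputable section

/-- The Lévy density `s(x) = (C₊·1_{x>0} + C₋·1_{x<0})·q(x)·|x|^{−1−Y}`. -/
def levyDensity (Y Cp Cm : ℝ) (q : ℝ → ℝ) (x : ℝ) : ℝ :=
  (if 0 < x then Cp else if x < 0 then Cm else 0) * q x * |x| ^ (-1 - Y)

/-- The Lévy measure `ν(dx) = s(x) dx`. -/
def levyMeasure (Y Cp Cm : ℝ) (q : ℝ → ℝ) : Measure ℝ :=
  volume.withDensity fun x => ENNReal.ofReal (levyDensity Y Cp Cm q x)

/-- The Lévy exponent `ψ_J(u) = ibu + ∫ (e^{iux} − 1 − iux·1_{|x|≤1}) ν(dx)`. -/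
def psiJ (b Y Cp Cm : ℝ) (q : ℝ → ℝ) (u : ℝ) : ℂ :=
  Complex.I * b * u +
    ∫ x : ℝ,
      (Complex.exp (Complex.I * u * x) - 1 - (if |x| ≤ 1 then Complex.I * u * x else 0))
      ∂(levyMeasure Y Cp Cm q)

/-- The scale parameter `ς = ((C₊+C₋)Γ(−Y)|cos(πY/2)|)^{1/Y}`. -/
def varsigma (Y Cp Cm : ℝ) : ℝ :=
  ((Cp + Cm) * Real.Gamma (-Y) * |Real.cos (π * Y / 2)|) ^ (1 / Y)

/-- The stable part of the Lévy exponent: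
`ς^Y |u|^Y (1 − iβ·sgn(u)·tan(πY/2))` with `β = (C₊−C₋)/(C₊+C₋)`. -/
def stablePart (Y Cp Cm : ℝ) (u : ℝ) : ℂ :=
  (varsigma Y Cp Cm ^ Y * |u| ^ Y : ℝ) *
    (1 - Complex.I * ((Cp - Cm) / (Cp + Cm)) * Real.sign u * Real.tan (π * Y / 2))

/-- Characteristic function of `X̃_h`, the time-`h` marginal of a Brownian motion with
variance `σ²` plus an independent strictly `Y`-stable process. -/
def tildeCF (σ Y Cp Cm : ℝ) (h u : ℝ) : ℂ :=
  Complex.exp (-(σ ^ 2 * u ^ 2 * h / 2) - h * stablePart Y Cp Cm u)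


lemma gauss_even_moment (k : ℕ) :
    ∫ x : ℝ, x ^ (2 * k) ∂(gaussianReal 0 1) = (Nat.doubleFactorial (2 * k - 1) : ℝ) := by
  rw [integral_gaussianReal_eq_integral_smul (by norm_num)]
  have h1 : (fun x : ℝ => gaussianPDFReal 0 1 x • x ^ (2 * k)) =
      fun x : ℝ => (fun y : ℝ => (√(2 * π))⁻¹ * (y ^ ((2 * k : ℝ)) * Real.exp (-(1/2) * y ^ (2 : ℝ)))) |x| := by
    funext x
    have e1 : |x| ^ ((2 * k : ℝ)) = x ^ (2 * k) := by
      rw [show (2 * k : ℝ) = ((2 * k : ℕ) : ℝ) by push_cast; ring, Real.rpow_natCast,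
        pow_mul, pow_mul, sq_abs]
    have e2 : |x| ^ (2 : ℝ) = x ^ 2 := by
      rw [show (2 : ℝ) = ((2 : ℕ) : ℝ) by norm_num, Real.rpow_natCast, sq_abs]
    simp only [e1, e2, gaussianPDFReal, smul_eq_mul, NNReal.coe_one, sub_zero, mul_one]
    rw [show -(x ^ 2) / 2 = -(1 / 2) * x ^ 2 by ring]
    ring
  rw [h1, integral_comp_abs (f := fun y : ℝ => (√(2 * π))⁻¹ * (y ^ ((2 * k : ℝ)) * Real.exp (-(1/2) * y ^ (2 : ℝ)))),
    integral_const_mul,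
    integral_rpow_mul_exp_neg_mul_rpow (by norm_num) (by linarith [Nat.cast_nonneg (α := ℝ) k])
      (by norm_num),
    show ((2 * k : ℝ) + 1) / 2 = k + 1 / 2 by ring, Real.Gamma_nat_add_half,
    show -((2 * k : ℝ) + 1) / 2 = -(k + 1 / 2 : ℝ) by ring]
  rw [one_div, Real.inv_rpow (by norm_num), Real.rpow_neg (by norm_num), inv_inv,
    Real.rpow_add (by norm_num), Real.rpow_natCast, ← one_div, inv_eq_one_div (2 : ℝ), ← Real.sqrt_eq_rpow,
    Real.sqrt_mul (by norm_num)]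
  have : √π ≠ 0 := by positivity
  field_simp

lemma gauss_tail (k : ℕ) (hk : 1 ≤ k) (a : ℝ) (ha : 0 < a) (hak : 4 * (k : ℝ) ≤ a ^ 2) :
    ∫ x : ℝ, Set.indicator {x : ℝ | a < |x|} (fun x => x ^ (2 * k)) x ∂(gaussianReal 0 1) ≤
      4 * a ^ (2 * k - 1) * Real.exp (-(a ^ 2) / 2) := by
  rw [integral_gaussianReal_eq_integral_smul (by norm_num)]
  have h1 : (fun x : ℝ => gaussianPDFReal 0 1 x •
      Set.indicator {x : ℝ | a < |x|} (fun x => x ^ (2 * k)) x) =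
      fun x : ℝ => (Set.indicator (Ioi a) (fun y : ℝ =>
        (√(2 * π))⁻¹ * (y ^ (2 * k) * Real.exp (-(y ^ 2) / 2)))) |x| := by
    funext x
    simp only [indicator, mem_ofPred_eq, mem_Ioi, sq_abs, gaussianPDFReal, smul_eq_mul,
      NNReal.coe_one, sub_zero, mul_one, pow_mul]
    split_ifs
    · ring
    · simp
  rw [h1, integral_comp_abs, setIntegral_indicator measurableSet_Ioi,
    inter_eq_right.2 (Ioi_subset_Ioi ha.le), integral_const_mul]
  obtain ⟨m, rfl⟩ : ∃ m, k = m + 1 := ⟨k - 1, by omega⟩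
  -- antiderivative
  set g : ℝ → ℝ := fun y => -(2 * (y ^ (2 * m + 1) * Real.exp (-(y ^ 2) / 2))) with hg
  set g' : ℝ → ℝ := fun y => 2 * (y ^ (2 * m + 2) - (2 * m + 1) * y ^ (2 * m)) *
    Real.exp (-(y ^ 2) / 2) with hg'
  have hd : ∀ y ∈ Ici a, HasDerivAt g (g' y) y := by
    intro y _
    have d1 : HasDerivAt (fun y : ℝ => Real.exp (-(y ^ 2) / 2))
        (Real.exp (-(y ^ 2) / 2) * (-y)) y := by
      have := (((hasDerivAt_pow 2 y).neg).div_const 2).exp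
      refine this.congr_deriv ?_
      change Real.exp (-(y ^ 2) / 2) * _ = _
      congr 1
      push_cast
      ring
    have d2 := (((hasDerivAt_pow (2 * m + 1) y).mul d1).const_mul 2).neg
    refine d2.congr_deriv ?_
    simp only [hg']
    rw [Nat.add_sub_cancel]
    push_cast
    ring
  have hle : ∀ y ∈ Ioi a, y ^ (2 * (m + 1)) * Real.exp (-(y ^ 2) / 2) ≤ g' y := by
    intro y hy
    have hy' : a < y := hy
    have : a ^ 2 ≤ y ^ 2 := by gcongr
    have h0 : 0 ≤ y ^ (2 * m) := by rw [pow_mul]; positivity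
    simp only [hg']
    have hE := Real.exp_pos (-(y ^ 2) / 2)
    apply mul_le_mul_of_nonneg_right _ hE.le
    rw [show 2 * (m + 1) = 2 * m + 2 by ring, pow_add]
    push_cast at hak
    nlinarith [mul_nonneg h0 (show 0 ≤ y ^ 2 - 2 * (2 * m + 1) by nlinarith)]
  have hpos : ∀ y ∈ Ioi a, 0 ≤ g' y := fun y hy => le_trans (by
    have : 0 < y := ha.trans hy
    positivity) (hle y hy)
  have hlim : Tendsto g atTop (𝓝 0) := by
    have := (tendsto_rpow_abs_mul_exp_neg_mul_sq_cocompact (a := 1 / 2) (by norm_num) (2 * m + 1)).mono_left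
      (atTop_le_cocompact (α := ℝ))
    have h2 := (this.const_mul 2).neg
    simp only [mul_zero, neg_zero] at h2
    refine h2.congr' ?_
    filter_upwards [eventually_gt_atTop 0] with y hy
    simp only [hg, abs_of_pos hy]
    rw [show (2 * m + 1 : ℝ) = ((2 * m + 1 : ℕ) : ℝ) by push_cast; ring, Real.rpow_natCast,
      show -(1/2) * y ^ 2 = -(y ^ 2) / 2 by ring]
  have hI := integrableOn_Ioi_deriv_of_nonneg' hd hpos hlim
  have hE := integral_Ioi_of_hasDerivAt_of_nonneg' hd hpos hlim
  have hmono : ∫ y in Ioi a, y ^ (2 * (m + 1)) * Real.exp (-(y ^ 2) / 2) ≤ ∫ y in Ioi a, g' y := by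
    apply integral_mono_of_nonneg _ hI
    · exact (ae_restrict_iff' measurableSet_Ioi).2 (Eventually.of_forall hle)
    · refine (ae_restrict_iff' measurableSet_Ioi).2 (Eventually.of_forall fun y hy => ?_)
      have : 0 < y := ha.trans hy
      simp only [Pi.zero_apply]; positivity
  rw [hE] at hmono
  have hc : (√(2 * π))⁻¹ ≤ 1 := by
    apply inv_le_one_of_one_le₀
    rw [Real.one_le_sqrt]
    nlinarith [Real.pi_gt_three]
  have hc0 : 0 ≤ (√(2 * π))⁻¹ := by positivity
  rw [show 2 * (m + 1) - 1 = 2 * m + 1 by omega]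
  simp only [hg] at hmono
  have hp : 0 ≤ a ^ (2 * m + 1) * Real.exp (-(a ^ 2) / 2) := by positivity
  calc _ ≤ 2 * ((√(2 * π))⁻¹ * (2 * (a ^ (2 * m + 1) * Real.exp (-(a ^ 2) / 2)))) := by
        gcongr; linarith
    _ ≤ 2 * (1 * (2 * (a ^ (2 * m + 1) * Real.exp (-(a ^ 2) / 2)))) := by gcongr
    _ = _ := by ring

lemma psi_integrand_bound (U u x : ℝ) (hU : 1 ≤ U) (hu : |u| ≤ U) :
    ‖Complex.exp (Complex.I * u * x) - 1 - (if |x| ≤ 1 then Complex.I * u * x else 0)‖ ≤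
      if |x| ≤ U⁻¹ then U ^ 2 * x ^ 2 else 3 * U * |x| := by
  have hU0 : 0 < U := by linarith
  have hux : |u * x| ≤ U * |x| := by
    rw [abs_mul]; gcongr
  have hn : ‖Complex.I * u * x‖ = |u * x| := by simp [abs_mul]
  split_ifs with h1 h2 h2
  · have h3 : |u * x| ≤ 1 := by
      calc |u * x| ≤ U * |x| := hux
        _ ≤ U * U⁻¹ := by gcongr
        _ = 1 := mul_inv_cancel₀ hU0.ne'
    refine (Complex.norm_exp_sub_one_sub_id_le (by rw [hn]; exact h3)).trans ?_
    rw [hn, ← mul_pow, ← sq_abs (U * x), abs_mul U x, abs_of_pos hU0]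
    gcongr
  · have h4 : ‖Complex.exp (Complex.I * u * x) - 1‖ ≤ |u * x| := by
      have := Real.norm_exp_I_mul_ofReal_sub_one_le (x := u * x)
      push_cast at this
      rwa [← mul_assoc] at this
    calc _ ≤ ‖Complex.exp (Complex.I * u * x) - 1‖ + ‖Complex.I * u * x‖ := norm_sub_le _ _
      _ ≤ U * |x| + U * |x| := by rw [hn]; gcongr; exact h4.trans hux
      _ ≤ _ := by nlinarith [mul_nonneg hU0.le (abs_nonneg x)]
  · exact absurd (h2.trans (inv_le_one_of_one_le₀ hU)) h1
  · have h4 : ‖Complex.exp (Complex.I * u * x) - 1‖ ≤ |u * x| := by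
      have := Real.norm_exp_I_mul_ofReal_sub_one_le (x := u * x)
      push_cast at this
      rwa [← mul_assoc] at this
    rw [sub_zero]
    nlinarith [mul_nonneg hU0.le (abs_nonneg x)]

lemma psi_bound (Y Cp Cm b : ℝ) (q : ℝ → ℝ)
    (hY1 : 1 < Y) (hY2 : Y < 2) (hCp : 0 < Cp) (hCm : 0 < Cm)
    (hq_meas : Measurable q) (hq_nonneg : ∀ x, 0 ≤ q x) (M : ℝ) (hM : ∀ x, q x ≤ M) :
    ∃ C : ℝ, 0 < C ∧ ∀ U u : ℝ, 1 ≤ U → |u| ≤ U → ‖psiJ b Y Cp Cm q u‖ ≤ C * U ^ Y := by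
  have hM0 : 0 ≤ M := (hq_nonneg 0).trans (hM 0)
  set K := (Cp + Cm) * M with hK
  have hK0 : 0 ≤ K := by positivity
  set C := 2 * K * (1 / (2 - Y) + 3 / (Y - 1)) with hC
  have hC0 : 0 ≤ C := by
    have : 0 < 2 - Y := by linarith
    have : 0 < Y - 1 := by linarith
    positivity
  refine ⟨|b| + C + 1, by positivity, fun U u hU hu => ?_⟩
  have hU0 : 0 < U := by linarith
  have hUi : 0 < U⁻¹ := by positivity
  have hmeasD : Measurable (levyDensity Y Cp Cm q) := by
    unfold levyDensity
    refine ((Measurable.ite measurableSet_Ioi measurable_const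
      (Measurable.ite measurableSet_Iio measurable_const measurable_const)).mul hq_meas).mul ?_
    fun_prop
  have hDnn : ∀ x, 0 ≤ levyDensity Y Cp Cm q x := by
    intro x
    unfold levyDensity
    have := hq_nonneg x
    split_ifs <;> positivity
  have hDle : ∀ x, levyDensity Y Cp Cm q x ≤ K * |x| ^ (-1 - Y) := by
    intro x
    unfold levyDensity
    rw [hK]
    have := hq_nonneg x
    gcongr
    · split_ifs <;> linarith
    · exact hM x
  -- majorant on (0, ∞)
  set G : ℝ → ℝ := fun y => K * ((if y ≤ U⁻¹ then U ^ 2 * y ^ 2 else 3 * U * y) * y ^ (-1 - Y)) with hG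
  have hI1 : IntegrableOn G (Ioc 0 U⁻¹) ∧ ∫ y in Ioc 0 U⁻¹, G y = K * (U ^ Y / (2 - Y)) := by
    have he : EqOn (fun y => K * U ^ 2 * y ^ (1 - Y)) G (Ioc 0 U⁻¹) := by
      intro y hy
      simp only [hG, if_pos hy.2]
      rw [show (1 - Y) = ((2 : ℕ) : ℝ) + (-1 - Y) by push_cast; ring, Real.rpow_add hy.1,
        Real.rpow_natCast]
      ring
    have i1 : IntegrableOn (fun y : ℝ => K * U ^ 2 * y ^ (1 - Y)) (Ioc 0 U⁻¹) := by
      apply Integrable.const_mul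
      have := (intervalIntegral.intervalIntegrable_rpow' (a := 0) (b := U⁻¹) (r := 1 - Y) (by linarith))
      exact (intervalIntegrable_iff_integrableOn_Ioc_of_le hUi.le).1 this
    refine ⟨i1.congr_fun he measurableSet_Ioc, ?_⟩
    rw [← setIntegral_congr_fun measurableSet_Ioc he, integral_const_mul,
      ← intervalIntegral.integral_of_le hUi.le, integral_rpow (Or.inl (by linarith)),
      Real.zero_rpow (by linarith), Real.inv_rpow hU0.le, ← Real.rpow_neg hU0.le,
      sub_zero, show Y = ((2 : ℕ) : ℝ) + -(1 - Y + 1) by push_cast; ring, Real.rpow_add hU0,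
      Real.rpow_natCast]
    ring_nf
  have hI2 : IntegrableOn G (Ioi U⁻¹) ∧ ∫ y in Ioi U⁻¹, G y = K * (3 * U ^ Y / (Y - 1)) := by
    have he : EqOn (fun y => K * (3 * U) * y ^ (-Y)) G (Ioi U⁻¹) := by
      intro y hy
      have hy' : U⁻¹ < y := hy
      simp only [hG, if_neg (not_le.2 hy')]
      rw [show (-Y) = ((1 : ℕ) : ℝ) + (-1 - Y) by push_cast; ring, Real.rpow_add (hUi.trans hy'),
        Real.rpow_natCast]
      ring
    have i1 : IntegrableOn (fun y : ℝ => K * (3 * U) * y ^ (-Y)) (Ioi U⁻¹) := by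
      apply Integrable.const_mul
      exact integrableOn_Ioi_rpow_of_lt (by linarith) hUi
    refine ⟨i1.congr_fun he measurableSet_Ioi, ?_⟩
    rw [← setIntegral_congr_fun measurableSet_Ioi he, integral_const_mul,
      integral_Ioi_rpow_of_lt (by linarith) hUi, Real.inv_rpow hU0.le, ← Real.rpow_neg hU0.le]
    have e : U ^ Y = U * U ^ (-(-Y + 1)) := by
      nth_rewrite 2 [← Real.rpow_one U]
      rw [← Real.rpow_add hU0]; ring_nf
    rw [e]
    have : Y - 1 ≠ 0 := by linarith
    have : -Y + 1 ≠ 0 := by linarith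
    field_simp
    ring
  have hGi : IntegrableOn G (Ioi 0) := by
    rw [← Ioc_union_Ioi_eq_Ioi hUi.le]
    exact hI1.1.union hI2.1
  have hGv : ∫ y in Ioi 0, G y = K * (U ^ Y / (2 - Y)) + K * (3 * U ^ Y / (Y - 1)) := by
    rw [← Ioc_union_Ioi_eq_Ioi hUi.le, setIntegral_union Ioc_disjoint_Ioi_same measurableSet_Ioi
      hI1.1 hI2.1, hI1.2, hI2.2]
  have hGai : Integrable (fun x => G |x|) := by
    have hf : IntegrableOn (fun x => G |x|) (Ioi 0) := by
      refine hGi.congr_fun (fun x hx => ?_) measurableSet_Ioi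
      rw [abs_of_pos hx]
    have int_Iic : IntegrableOn (fun x ↦ G |x|) (Iic 0) := by
      rw [← Measure.map_neg_eq_self (volume : Measure ℝ)]
      let m : MeasurableEmbedding fun x : ℝ => -x := (Homeomorph.neg ℝ).measurableEmbedding
      rw [m.integrableOn_map_iff]
      simp_rw [Function.comp_def, abs_neg, neg_preimage, neg_Iic, neg_zero]
      exact Iff.mpr integrableOn_Ici_iff_integrableOn_Ioi hf
    have := int_Iic.union hf
    rwa [Iic_union_Ioi, integrableOn_univ] at this
  have key : ‖∫ x : ℝ,
      (Complex.exp (Complex.I * u * x) - 1 - (if |x| ≤ 1 then Complex.I * u * x else 0))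
      ∂(levyMeasure Y Cp Cm q)‖ ≤ C * U ^ Y := by
    unfold levyMeasure
    rw [integral_withDensity_eq_integral_toReal_smul (by fun_prop) (by simp)]
    refine (norm_integral_le_of_norm_le hGai (Eventually.of_forall fun x => ?_)).trans ?_
    · rw [norm_smul, ENNReal.toReal_ofReal (hDnn x), Real.norm_of_nonneg (hDnn x)]
      simp only [hG]
      rw [sq_abs]
      have hb := psi_integrand_bound U u x hU hu
      calc _ ≤ (K * |x| ^ (-1 - Y)) * (if |x| ≤ U⁻¹ then U ^ 2 * x ^ 2 else 3 * U * |x|) :=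
            mul_le_mul (hDle x) hb (norm_nonneg _) (by positivity)
        _ = _ := by ring
    · rw [integral_comp_abs (f := G), hGv, hC]
      apply le_of_eq
      ring
  have hUY : U ≤ U ^ Y := by
    nth_rewrite 1 [← Real.rpow_one U]
    exact Real.rpow_le_rpow_of_exponent_le hU hY1.le
  unfold psiJ
  refine (norm_add_le _ _).trans ?_
  have h5 : ‖Complex.I * b * u‖ ≤ |b| * U ^ Y := by
    simp only [norm_mul, Complex.norm_I, one_mul, Complex.norm_real, Real.norm_eq_abs]
    gcongr
    exact hu.trans hUY
  nlinarith [Real.rpow_pos_of_pos hU0 Y]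

lemma tail_bound {Ω : Type*} [MeasurableSpace Ω] (P : Measure Ω) [IsProbabilityMeasure P]
    (Y C : ℝ) (hY2 : Y < 2) (hC : 0 < C) (ψ : ℝ → ℂ)
    (hψ : ∀ U u : ℝ, 1 ≤ U → |u| ≤ U → ‖ψ u‖ ≤ C * U ^ Y)
    (h : ℝ) (hh : 0 < h) (X : Ω → ℝ) (hX : Measurable X)
    (hcf : ∀ u : ℝ, ∫ ω, Complex.exp (Complex.I * u * X ω) ∂P = Complex.exp (h * ψ u))
    (r : ℝ) (hr : 0 < r) (hr1 : r ≤ 1) :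
    P.real {ω | r < |X ω|} ≤ 16 * C * h * r ^ (-Y) := by
  have : IsProbabilityMeasure (P.map X) := Measure.isProbabilityMeasure_map hX.aemeasurable
  have hms : MeasurableSet {x : ℝ | r < |x|} := measurableSet_lt measurable_const (by fun_prop)
  have h1 := measureReal_abs_gt_le_integral_charFun (μ := P.map X) hr
  rw [map_measureReal_apply hX hms] at h1
  have hcf' : ∀ t : ℝ, charFun (P.map X) t = Complex.exp (h * ψ t) := by
    intro t
    rw [charFun_apply_real, integral_map hX.aemeasurable (by fun_prop), ← hcf t]
    congr 1; funext ω; congr 1; ring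
  set U := 2 * r⁻¹ with hU
  have hU1 : 1 ≤ U := by
    have := (one_le_inv₀ hr).2 hr1
    linarith
  have hB : ∀ t ∈ Set.uIoc (-2 * r⁻¹) U, ‖1 - charFun (P.map X) t‖ ≤ 2 * (h * (C * U ^ Y)) := by
    intro t ht
    rw [uIoc_of_le (by rw [hU]; have := inv_pos.2 hr; linarith)] at ht
    have htU : |t| ≤ U := abs_le.2 ⟨by rw [hU]; linarith [ht.1], ht.2⟩
    have hψt := hψ U t hU1 htU
    have hn : ‖(h : ℂ) * ψ t‖ ≤ h * (C * U ^ Y) := by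
      rw [norm_mul, Complex.norm_real, Real.norm_of_nonneg hh.le]
      gcongr
    by_cases hz : ‖(h : ℂ) * ψ t‖ ≤ 1
    · rw [hcf' t, norm_sub_rev]
      exact (Complex.norm_exp_sub_one_le hz).trans (by gcongr)
    · refine (norm_one_sub_charFun_le_two).trans ?_
      linarith
  have h2 := intervalIntegral.norm_integral_le_of_norm_le_const hB
  have h3 : |U - -2 * r⁻¹| = 4 * r⁻¹ := by
    rw [hU, abs_of_pos] <;> have := inv_pos.2 hr <;> linarith
  rw [h3] at h2
  have h4 : U ^ Y ≤ 4 * r ^ (-Y) := by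
    rw [hU, Real.mul_rpow (by norm_num) (by positivity), Real.inv_rpow hr.le, ← Real.rpow_neg hr.le]
    gcongr
    calc (2 : ℝ) ^ Y ≤ 2 ^ (2 : ℝ) := Real.rpow_le_rpow_of_exponent_le (by norm_num) hY2.le
      _ = 4 := by norm_num
  have h5 : (0 : ℝ) < U ^ Y := by positivity
  calc P.real {ω | r < |X ω|} ≤ 2⁻¹ * r * (2 * (h * (C * U ^ Y)) * (4 * r⁻¹)) :=
        h1.trans (by gcongr)
    _ = 4 * h * C * U ^ Y := by field_simp
    _ ≤ 4 * h * C * (4 * r ^ (-Y)) := by gcongr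
    _ = _ := by ring

lemma indicator_split (σ s L w x : ℝ) (hσ : 0 < σ) (hs : 0 < s) (hL : 2 ≤ L)
    (hx : L * s < |σ * s * w + x|) :
    L * s / 2 < |x| ∨ (s / L < |x| ∧ 1 ≤ (2 * σ * w / L) ^ 4) ∨ (L - 1 / L) / σ < |w| := by
  by_cases h1 : L * s / 2 < |x|
  · exact Or.inl h1
  right
  have hL0 : 0 < L := by linarith
  have h2 : L * s < σ * s * |w| + |x| := by
    refine hx.trans_le ((abs_add_le _ _).trans ?_)
    rw [abs_mul, abs_of_pos (mul_pos hσ hs)]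
  by_cases h3 : s / L < |x|
  · left
    refine ⟨h3, ?_⟩
    have h4 : L / 2 < σ * |w| := by
      have : s * (L / 2) < s * (σ * |w|) := by push Not at h1; linarith
      exact lt_of_mul_lt_mul_left this hs.le
    have h5 : 1 ≤ |2 * σ * w / L| := by
      rw [abs_div, abs_mul, abs_of_pos hL0, abs_of_pos (by linarith : 0 < 2 * σ), le_div_iff₀ hL0]
      linarith
    have h6 : (2 * σ * w / L) ^ 4 = |2 * σ * w / L| ^ 4 := by
      rw [← abs_pow, abs_of_nonneg (by positivity)]
    rw [h6]
    exact one_le_pow₀ h5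
  · right
    push Not at h3
    rw [div_lt_iff₀ hσ]
    have : s * (L - 1 / L) < s * (|w| * σ) := by
      have e : s * (L - 1 / L) = L * s - s / L := by ring
      rw [e]; linarith
    exact lt_of_mul_lt_mul_left this hs.le

lemma core_bound {Ω : Type*} [MeasurableSpace Ω] (P : Measure Ω) [IsProbabilityMeasure P]
    (W X : Ω → ℝ) (hWmeas : Measurable W) (hW : P.map W = gaussianReal 0 1)
    (hX : Measurable X) (hind : IndepFun W X P) (k : ℕ) (hk : 1 ≤ k)
    (σ s L : ℝ) (hσ : 0 < σ) (hs : 0 < s) (hL : 2 ≤ L)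
    (hLk : 4 * (k : ℝ) ≤ ((L - 1 / L) / σ) ^ 2) :
    ∫ ω, (s * W ω) ^ (2 * k) * Set.indicator {x : ℝ | L * s < |x|} (fun _ => (1 : ℝ))
        (σ * s * W ω + X ω) ∂P ≤
      s ^ (2 * k) * ((Nat.doubleFactorial (2 * k - 1) : ℝ) * P.real {ω | L * s / 2 < |X ω|} +
        (2 * σ / L) ^ 4 * (Nat.doubleFactorial (2 * (k + 2) - 1) : ℝ) * P.real {ω | s / L < |X ω|}
        + 4 * ((L - 1 / L) / σ) ^ (2 * k - 1) * Real.exp (-((L - 1 / L) / σ) ^ 2 / 2)) := by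
  have hL0 : 0 < L := by linarith
  have hLL : 1 / L < L := by
    rw [div_lt_iff₀ hL0]; nlinarith
  set a := (L - 1 / L) / σ with ha
  have ha0 : 0 < a := div_pos (by linarith) hσ
  have hint : ∀ n : ℕ, Integrable (fun w : ℝ => w ^ n) (gaussianReal 0 1) := by
    intro n
    have := (memLp_id_gaussianReal (μ := 0) (v := 1) (n : ℝ≥0)).integrable_norm_pow'
    refine (integrable_norm_iff (by fun_prop)).1 ?_
    simpa [norm_pow] using this
  have hmS : ∀ c : ℝ, MeasurableSet {x : ℝ | c < |x|} := fun c =>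
    measurableSet_lt measurable_const (by fun_prop)
  have hintW : ∀ (f : ℝ → ℝ), Integrable f (gaussianReal 0 1) → Integrable (fun ω => f (W ω)) P := by
    intro f hf
    rw [← hW] at hf
    exact hf.comp_measurable hWmeas
  have hEW : ∀ (f : ℝ → ℝ), Measurable f → ∫ ω, f (W ω) ∂P = ∫ x, f x ∂(gaussianReal 0 1) := by
    intro f hf
    rw [← hW, integral_map hWmeas.aemeasurable hf.aestronglyMeasurable]
  have hEX : ∀ c : ℝ, ∫ ω, Set.indicator {x : ℝ | c < |x|} (fun _ => (1 : ℝ)) (X ω) ∂P =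
      P.real {ω | c < |X ω|} := by
    intro c
    have e : (fun ω => Set.indicator {x : ℝ | c < |x|} (fun _ => (1 : ℝ)) (X ω)) =
        Set.indicator {ω | c < |X ω|} (fun _ => (1 : ℝ)) := by
      funext ω; simp [indicator]
    have hm : MeasurableSet {ω | c < |X ω|} := hX (hmS c)
    rw [e, integral_indicator_const _ hm]
    simp
  have hmI : ∀ c : ℝ, Measurable (Set.indicator {x : ℝ | c < |x|} (fun _ => (1 : ℝ))) := fun c =>
    measurable_const.indicator (hmS c)
  have hprod : ∀ (n : ℕ) (c : ℝ),
      ∫ ω, (W ω) ^ n * Set.indicator {x : ℝ | c < |x|} (fun _ => (1 : ℝ)) (X ω) ∂P =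
      (∫ x, x ^ n ∂(gaussianReal 0 1)) * P.real {ω | c < |X ω|} := by
    intro n c
    rw [hind.integral_fun_comp_mul_comp (f := fun w : ℝ => w ^ n) hWmeas.aemeasurable
      hX.aemeasurable (by fun_prop) (hmI c).aestronglyMeasurable, hEX, hEW (fun w : ℝ => w ^ n) (by fun_prop)]
  have hprodI : ∀ (n : ℕ) (c : ℝ), Integrable
      (fun ω => (W ω) ^ n * Set.indicator {x : ℝ | c < |x|} (fun _ => (1 : ℝ)) (X ω)) P := by
    intro n c
    refine (hintW _ (hint n)).mul_bdd (c := 1) ((hmI c).comp hX).aestronglyMeasurable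
      (Eventually.of_forall fun ω => ?_)
    simp only [indicator]; split_ifs <;> simp
  have htI : Integrable (Set.indicator {x : ℝ | a < |x|} (fun x => x ^ (2 * k))) (gaussianReal 0 1) :=
    (hint _).indicator (hmS a)
  have htm : Measurable (Set.indicator {x : ℝ | a < |x|} (fun x => x ^ (2 * k))) :=
    (by fun_prop : Measurable fun x : ℝ => x ^ (2 * k)).indicator (hmS a)
  have hI1 := hprodI (2 * k) (L * s / 2)
  have hI2 := (hprodI (2 * (k + 2)) (s / L)).const_mul ((2 * σ / L) ^ 4)
  have hI3 := hintW _ htI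
  have hle : ∀ ω, (s * W ω) ^ (2 * k) * Set.indicator {x : ℝ | L * s < |x|} (fun _ => (1 : ℝ))
        (σ * s * W ω + X ω) ≤ s ^ (2 * k) * (
        (W ω) ^ (2 * k) * Set.indicator {x : ℝ | L * s / 2 < |x|} (fun _ => (1 : ℝ)) (X ω) +
        (2 * σ / L) ^ 4 *
          ((W ω) ^ (2 * (k + 2)) * Set.indicator {x : ℝ | s / L < |x|} (fun _ => (1 : ℝ)) (X ω)) +
        Set.indicator {x : ℝ | a < |x|} (fun x => x ^ (2 * k)) (W ω)) := by
    intro ω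
    have w0 : 0 ≤ (W ω) ^ (2 * k) := by rw [pow_mul]; positivity
    have w1 : 0 ≤ (W ω) ^ (2 * (k + 2)) := by rw [pow_mul]; positivity
    rw [mul_pow, mul_assoc]
    apply mul_le_mul_of_nonneg_left _ (by positivity)
    have n1 : 0 ≤ (W ω) ^ (2 * k) * Set.indicator {x : ℝ | L * s / 2 < |x|} (fun _ => (1 : ℝ)) (X ω) :=
      mul_nonneg w0 (indicator_nonneg (by simp) _)
    have n2 : 0 ≤ (2 * σ / L) ^ 4 *
          ((W ω) ^ (2 * (k + 2)) * Set.indicator {x : ℝ | s / L < |x|} (fun _ => (1 : ℝ)) (X ω)) :=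
      mul_nonneg (by positivity) (mul_nonneg w1 (indicator_nonneg (by simp) _))
    have n3 : 0 ≤ Set.indicator {x : ℝ | a < |x|} (fun x => x ^ (2 * k)) (W ω) :=
      indicator_nonneg (fun x _ => by rw [pow_mul]; positivity) _
    by_cases hx : L * s < |σ * s * W ω + X ω|
    · rw [indicator_of_mem (show _ ∈ {x : ℝ | L * s < |x|} from hx), mul_one]
      rcases indicator_split σ s L (W ω) (X ω) hσ hs hL hx with h | ⟨h, h'⟩ | h
      · rw [indicator_of_mem (show X ω ∈ {x : ℝ | L * s / 2 < |x|} from h), mul_one]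
        linarith
      · rw [indicator_of_mem (show X ω ∈ {x : ℝ | s / L < |x|} from h), mul_one] at *
        have : (2 * σ / L) ^ 4 * (W ω) ^ (2 * (k + 2)) = (2 * σ * W ω / L) ^ 4 * (W ω) ^ (2 * k) := by
          rw [show 2 * (k + 2) = 2 * k + 4 by ring, pow_add]; ring
        rw [this] at *
        nlinarith
      · rw [indicator_of_mem (show W ω ∈ {x : ℝ | a < |x|} from h)] at *
        linarith
    · rw [indicator_of_notMem (show _ ∉ {x : ℝ | L * s < |x|} from hx), mul_zero]
      positivity
  refine (integral_mono_of_nonneg (Eventually.of_forall fun ω => ?_)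
    (((hI1.add hI2).add hI3).const_mul (s ^ (2 * k))) (Eventually.of_forall hle)).trans ?_
  · refine mul_nonneg (by rw [pow_mul]; positivity) (indicator_nonneg (by simp) _)
  · rw [integral_const_mul]
    simp only [Pi.add_apply]
    rw [integral_add (by exact hI1.add hI2) hI3]
    rw [integral_add hI1 hI2, integral_const_mul, hprod, hprod, gauss_even_moment, gauss_even_moment,
      hEW _ htm]
    have := gauss_tail k hk a ha0 hLk
    apply mul_le_mul_of_nonneg_left _ (by positivity)
    rw [mul_assoc ((2 * σ / L) ^ 4)]
    linarith

lemma rate_bound (Y D m m' σ s L p1 p2 : ℝ) (k : ℕ) (hY1 : 1 < Y) (hY2 : Y < 2) (hk : 1 ≤ k)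
    (hσ : 0 < σ) (hs : 0 < s) (hL : 2 ≤ L) (hD : 0 < D) (hm : 0 ≤ m) (hm' : 0 ≤ m')
    (hp1 : p1 ≤ D * s ^ 2 * (L * s / 2) ^ (-Y)) (hp2 : p2 ≤ D * s ^ 2 * (s / L) ^ (-Y)) :
    s ^ (2 * k) * (m * p1 + (2 * σ / L) ^ 4 * m' * p2 +
      4 * ((L - 1 / L) / σ) ^ (2 * k - 1) * Real.exp (-((L - 1 / L) / σ) ^ 2 / 2)) ≤
    (4 * m * D + 16 * σ ^ 4 * m' * D) * ((s ^ 2) ^ 2 * (L * s) ^ (2 * (k : ℝ) - Y - 2)) +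
    4 * (1 / σ) ^ (2 * k - 1) * Real.exp (1 / σ ^ 2) *
      (s * (L * s) ^ (2 * k - 1) * Real.exp (-((L * s) ^ 2) / (2 * σ ^ 2 * s ^ 2))) := by
  have hL0 : 0 < L := by linarith
  obtain ⟨n, rfl⟩ : ∃ n, k = n + 1 := ⟨k - 1, by omega⟩
  set A := (s ^ 2) ^ 2 * (L * s) ^ (2 * ((n + 1 : ℕ) : ℝ) - Y - 2) with hA
  have eA : A = s ^ (2 * n + 4) * (L ^ (2 * n) * L ^ (-Y)) * s ^ (-Y) := by
    rw [hA, show 2 * ((n + 1 : ℕ) : ℝ) - Y - 2 = ((2 * n : ℕ) : ℝ) + -Y by push_cast; ring,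
      Real.rpow_add (by positivity), Real.rpow_natCast, mul_pow, Real.mul_rpow hL0.le hs.le]
    ring
  have hLn : 1 ≤ L ^ (2 * n) := one_le_pow₀ (by linarith)
  have hLY : 0 < L ^ (-Y) := by positivity
  have hsY : 0 < s ^ (-Y) := by positivity
  have t1 : s ^ (2 * (n + 1)) * (m * p1) ≤ 4 * m * D * A := by
    have e : (L * s / 2) ^ (-Y) ≤ 4 * (L ^ (-Y) * s ^ (-Y)) := by
      rw [Real.div_rpow (by positivity) (by norm_num), Real.mul_rpow hL0.le hs.le,
        Real.rpow_neg (by norm_num : (0:ℝ) ≤ 2), div_inv_eq_mul, mul_comm]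
      gcongr
      calc (2 : ℝ) ^ Y ≤ 2 ^ (2 : ℝ) := Real.rpow_le_rpow_of_exponent_le (by norm_num) hY2.le
        _ = 4 := by norm_num
    calc s ^ (2 * (n + 1)) * (m * p1)
        ≤ s ^ (2 * (n + 1)) * (m * (D * s ^ 2 * (4 * (L ^ (-Y) * s ^ (-Y))))) := by
          gcongr; exact hp1.trans (by gcongr)
      _ = 4 * m * D * (s ^ (2 * n + 4) * (1 * L ^ (-Y)) * s ^ (-Y)) := by ring
      _ ≤ 4 * m * D * (s ^ (2 * n + 4) * (L ^ (2 * n) * L ^ (-Y)) * s ^ (-Y)) := by gcongr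
      _ = _ := by rw [eA]
  have t2 : s ^ (2 * (n + 1)) * ((2 * σ / L) ^ 4 * m' * p2) ≤ 16 * σ ^ 4 * m' * D * A := by
    have e : (s / L) ^ (-Y) = s ^ (-Y) * L ^ Y := by
      rw [Real.div_rpow hs.le hL0.le, Real.rpow_neg hL0.le, div_inv_eq_mul]
    have e2 : L ^ Y / L ^ 4 ≤ L ^ (-Y) := by
      rw [← Real.rpow_natCast L 4, ← Real.rpow_sub hL0]
      apply Real.rpow_le_rpow_of_exponent_le (by linarith)
      push_cast; linarith
    calc s ^ (2 * (n + 1)) * ((2 * σ / L) ^ 4 * m' * p2)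
        ≤ s ^ (2 * (n + 1)) * ((2 * σ / L) ^ 4 * m' * (D * s ^ 2 * (s ^ (-Y) * L ^ Y))) := by
          rw [← e]; gcongr
      _ = 16 * σ ^ 4 * m' * D * (s ^ (2 * n + 4) * (1 * (L ^ Y / L ^ 4)) * s ^ (-Y)) := by
          field_simp; ring
      _ ≤ 16 * σ ^ 4 * m' * D * (s ^ (2 * n + 4) * (L ^ (2 * n) * L ^ (-Y)) * s ^ (-Y)) := by gcongr
      _ = _ := by rw [eA]
  have hLL : 1 / L < L := by
    rw [div_lt_iff₀ hL0]; nlinarith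
  have t3 : s ^ (2 * (n + 1)) * (4 * ((L - 1 / L) / σ) ^ (2 * (n + 1) - 1) *
      Real.exp (-((L - 1 / L) / σ) ^ 2 / 2)) ≤ 4 * (1 / σ) ^ (2 * (n + 1) - 1) * Real.exp (1 / σ ^ 2) *
      (s * (L * s) ^ (2 * (n + 1) - 1) * Real.exp (-((L * s) ^ 2) / (2 * σ ^ 2 * s ^ 2))) := by
    rw [show 2 * (n + 1) - 1 = 2 * n + 1 by omega, show 2 * (n + 1) = 2 * n + 1 + 1 by ring]
    have e1 : Real.exp (-((L - 1 / L) / σ) ^ 2 / 2) ≤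
        Real.exp (1 / σ ^ 2) * Real.exp (-((L * s) ^ 2) / (2 * σ ^ 2 * s ^ 2)) := by
      rw [← Real.exp_add]
      apply Real.exp_le_exp.2
      have : 1 / σ ^ 2 + -((L * s) ^ 2) / (2 * σ ^ 2 * s ^ 2) - (-((L - 1 / L) / σ) ^ 2 / 2) =
          1 / (2 * σ ^ 2 * L ^ 2) := by
        field_simp; ring
      have h0 : 0 < 1 / (2 * σ ^ 2 * L ^ 2) := by positivity
      linarith
    have e2 : ((L - 1 / L) / σ) ^ (2 * n + 1) ≤ (L / σ) ^ (2 * n + 1) := by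
      have : 0 < 1 / L := by positivity
      apply pow_le_pow_left₀ (div_nonneg (by linarith) hσ.le)
      gcongr; linarith
    calc _ ≤ s ^ (2 * n + 1 + 1) * (4 * (L / σ) ^ (2 * n + 1) *
          (Real.exp (1 / σ ^ 2) * Real.exp (-((L * s) ^ 2) / (2 * σ ^ 2 * s ^ 2)))) := by gcongr
      _ = _ := by
        rw [div_pow, div_pow, mul_pow, one_pow, pow_succ s (2 * n + 1)]
        ring
  linarith

/-- Lemma C.3: `E(W_h^{2k} 1_{|σW_h + J_h| ≤ ε}) = (2k−1)!! h^k +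
O(h² ε^{2k−Y−2}) + o(h^{k+1/Y}) + O(h^{1/2} ε^{2k−1} e^{−ε²/(2σ²h)})`. -/
theorem truncated_brownian_even_moments
    {Ω : Type*} [MeasurableSpace Ω] (P : Measure Ω) [IsProbabilityMeasure P]
    (Y Cp Cm σ b : ℝ) (q : ℝ → ℝ)
    (hY1 : 1 < Y) (hY2 : Y < 2)
    (hCp : 0 < Cp) (hCm : 0 < Cm) (hσ : 0 < σ)
    (hq_meas : Measurable q) (hq_nonneg : ∀ x, 0 ≤ q x)
    (hq_bdd : ∃ M : ℝ, ∀ x, q x ≤ M)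
    (hq_lim : Tendsto q (𝓝[≠] (0 : ℝ)) (𝓝 1))
    (hq_taylor : ∃ αp αm : ℝ, αp ≠ 0 ∧ αm ≠ 0 ∧
      IntegrableOn (fun x => |q x - 1 - αp * x| * x ^ (-Y - 1)) (Set.Ioc (0 : ℝ) 1) ∧
      IntegrableOn (fun x => |q x - 1 - αm * x| * |x| ^ (-Y - 1)) (Set.Ico (-1 : ℝ) 0))
    (hq_log : ∃ K M : ℝ, ∀ x : ℝ, M ≤ |x| → |Real.log (q x)| ≤ K * |x|)
    (hq_inf : ∀ ε : ℝ, 0 < ε → ∃ c : ℝ, 0 < c ∧ ∀ x : ℝ, x ≠ 0 → |x| < ε → c ≤ q x)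
    (hq_sq : IntegrableOn (fun x => q x ^ 2 * |x| ^ (-1 - Y)) {x : ℝ | 1 < |x|})
    -- the jump part `J` and the Brownian part `W`
    (J : ℝ → Ω → ℝ) (W : Ω → ℝ)
    (hWmeas : Measurable W) (hW : P.map W = gaussianReal 0 1)
    (hJmeas : ∀ h : ℝ, Measurable (J h))
    (hJcf : ∀ h : ℝ, 0 < h → ∀ u : ℝ,
      ∫ ω, Complex.exp (Complex.I * u * J h ω) ∂P = Complex.exp (h * psiJ b Y Cp Cm q u))
    (hindep : ∀ h : ℝ, 0 < h → IndepFun W (J h) P)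
    (k : ℕ) (hk : 1 ≤ k)
    -- the threshold `ε = ε(h)`
    (ε : ℝ → ℝ) (hεpos : ∀ h : ℝ, 0 < h → 0 < ε h)
    (hε0 : Tendsto ε (𝓝[>] (0 : ℝ)) (𝓝 0))
    (hεsqrt : Tendsto (fun h => ε h / Real.sqrt h) (𝓝[>] (0 : ℝ)) atTop) :
    ∃ R₁ R₂ R₃ : ℝ → ℝ,
      (∀ h : ℝ, 0 < h →
        (∫ ω, (Real.sqrt h * W ω) ^ (2 * k) *
            Set.indicator {x : ℝ | |x| ≤ ε h} (fun _ => (1 : ℝ))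
              (σ * Real.sqrt h * W ω + J h ω) ∂P)
          = (Nat.doubleFactorial (2 * k - 1) : ℝ) * h ^ k + R₁ h + R₂ h + R₃ h) ∧
      R₁ =O[𝓝[>] (0 : ℝ)] (fun h => h ^ 2 * ε h ^ (2 * (k : ℝ) - Y - 2)) ∧
      R₂ =o[𝓝[>] (0 : ℝ)] (fun h => h ^ ((k : ℝ) + 1 / Y)) ∧
      R₃ =O[𝓝[>] (0 : ℝ)]
        (fun h => Real.sqrt h * ε h ^ (2 * k - 1) * Real.exp (-(ε h ^ 2) / (2 * σ ^ 2 * h))) := by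
  obtain ⟨M, hM⟩ := hq_bdd
  obtain ⟨C, hC, hψ⟩ := psi_bound Y Cp Cm b q hY1 hY2 hCp hCm hq_meas hq_nonneg M hM
  set S : ℝ → Set ℝ := fun h => {x : ℝ | ε h < |x|} with hS
  have hmS : ∀ h, MeasurableSet (S h) := fun h =>
    measurableSet_lt measurable_const (by fun_prop)
  set T : ℝ → ℝ := fun h => ∫ ω, (Real.sqrt h * W ω) ^ (2 * k) *
    Set.indicator (S h) (fun _ => (1 : ℝ)) (σ * Real.sqrt h * W ω + J h ω) ∂P with hT
  set A : ℝ → ℝ := fun h => h ^ 2 * ε h ^ (2 * (k : ℝ) - Y - 2) with hA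
  set B : ℝ → ℝ := fun h => Real.sqrt h * ε h ^ (2 * k - 1) *
    Real.exp (-(ε h ^ 2) / (2 * σ ^ 2 * h)) with hB
  have hT0 : ∀ h, 0 ≤ T h := fun h => integral_nonneg fun ω =>
    mul_nonneg (by rw [pow_mul]; positivity) (indicator_nonneg (by simp) _)
  have hmain : ∀ h : ℝ, 0 < h →
        (∫ ω, (Real.sqrt h * W ω) ^ (2 * k) *
            Set.indicator {x : ℝ | |x| ≤ ε h} (fun _ => (1 : ℝ))
              (σ * Real.sqrt h * W ω + J h ω) ∂P)
          = (Nat.doubleFactorial (2 * k - 1) : ℝ) * h ^ k - T h := by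
    intro h hh
    have hint : Integrable (fun w : ℝ => w ^ (2 * k)) (gaussianReal 0 1) := by
      have := (memLp_id_gaussianReal (μ := 0) (v := 1) ((2 * k : ℕ) : ℝ≥0)).integrable_norm_pow'
      refine (integrable_norm_iff (by fun_prop)).1 ?_
      simpa [norm_pow] using this
    have hE : ∫ ω, (W ω) ^ (2 * k) ∂P = (Nat.doubleFactorial (2 * k - 1) : ℝ) := by
      rw [← gauss_even_moment k, ← hW, integral_map hWmeas.aemeasurable (by fun_prop)]
    have hI : Integrable (fun ω => (W ω) ^ (2 * k)) P := by
      rw [← hW] at hint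
      exact hint.comp_measurable hWmeas
    have hI' : Integrable (fun ω => (Real.sqrt h * W ω) ^ (2 * k)) P := by
      simp only [mul_pow]
      exact hI.const_mul _
    have hE' : ∫ ω, (Real.sqrt h * W ω) ^ (2 * k) ∂P =
        (Nat.doubleFactorial (2 * k - 1) : ℝ) * h ^ k := by
      simp only [mul_pow]
      rw [integral_const_mul, hE, pow_mul, Real.sq_sqrt hh.le, mul_comm]
    have hIT : Integrable (fun ω => (Real.sqrt h * W ω) ^ (2 * k) *
        Set.indicator (S h) (fun _ => (1 : ℝ)) (σ * Real.sqrt h * W ω + J h ω)) P := by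
      refine hI'.mul_bdd (c := 1) (Measurable.aestronglyMeasurable ?_)
        (Eventually.of_forall fun ω => ?_)
      · exact (measurable_const.indicator (hmS h)).comp ((hWmeas.const_mul _).add (hJmeas h))
      · simp only [indicator]; split_ifs <;> simp
    rw [← hE', hT, ← integral_sub hI' hIT]
    congr 1
    funext ω
    by_cases hx : |σ * Real.sqrt h * W ω + J h ω| ≤ ε h
    · rw [indicator_of_mem (show _ ∈ {x : ℝ | |x| ≤ ε h} from hx),
        indicator_of_notMem (show _ ∉ S h from not_lt.2 hx)]
      ring
    · rw [indicator_of_notMem (show _ ∉ {x : ℝ | |x| ≤ ε h} from hx),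
        indicator_of_mem (show _ ∈ S h from not_le.1 hx)]
      ring
  obtain ⟨K₁, K₂, hK₁, hK₂, hbound⟩ : ∃ K₁ K₂ : ℝ, 0 ≤ K₁ ∧ 0 ≤ K₂ ∧
      ∀ᶠ h in 𝓝[>] (0 : ℝ), T h ≤ K₁ * A h + K₂ * B h := by
    refine ⟨4 * (Nat.doubleFactorial (2 * k - 1) : ℝ) * (16 * C) +
      16 * σ ^ 4 * (Nat.doubleFactorial (2 * (k + 2) - 1) : ℝ) * (16 * C),
      4 * (1 / σ) ^ (2 * k - 1) * Real.exp (1 / σ ^ 2), by positivity, by positivity, ?_⟩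
    have ev1 : ∀ᶠ h in 𝓝[>] (0 : ℝ), 2 ≤ ε h / Real.sqrt h := hεsqrt.eventually_ge_atTop 2
    have ev2 : ∀ᶠ h in 𝓝[>] (0 : ℝ), 4 * k * σ ^ 2 + 2 ≤ ε h / Real.sqrt h :=
      hεsqrt.eventually_ge_atTop _
    have ev3 : ∀ᶠ h in 𝓝[>] (0 : ℝ), ε h < 1 := hε0.eventually_lt_const one_pos
    filter_upwards [ev1, ev2, ev3, self_mem_nhdsWithin] with h h1 h2 h3 hh
    replace hh : 0 < h := hh
    set s := Real.sqrt h with hs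
    have hs0 : 0 < s := Real.sqrt_pos.2 hh
    have hs2 : s ^ 2 = h := Real.sq_sqrt hh.le
    set L := ε h / s with hL
    have hL0 : 0 < L := by linarith
    have hLs : L * s = ε h := div_mul_cancel₀ _ hs0.ne'
    have hLk : 4 * (k : ℝ) ≤ ((L - 1 / L) / σ) ^ 2 := by
      rw [div_pow, le_div_iff₀ (by positivity)]
      have e : (L - 1 / L) ^ 2 = L ^ 2 - 2 + 1 / L ^ 2 := by field_simp; ring
      have : 0 < 1 / L ^ 2 := by positivity
      rw [e]
      nlinarith
    have htail : ∀ r : ℝ, 0 < r → r ≤ 1 → P.real {ω | r < |J h ω|} ≤ 16 * C * s ^ 2 * r ^ (-Y) := by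
      intro r hr hr1
      rw [hs2]
      exact tail_bound P Y C hY2 hC _ hψ h hh (J h) (hJmeas h) (hJcf h hh) r hr hr1
    have hsL : s / L ≤ 1 := by
      rw [div_le_one hL0]
      nlinarith
    have hc := core_bound P W (J h) hWmeas hW (hJmeas h) (hindep h hh) k hk σ s L hσ hs0 h1 hLk
    have hr := rate_bound Y (16 * C) (Nat.doubleFactorial (2 * k - 1))
      (Nat.doubleFactorial (2 * (k + 2) - 1)) σ s L _ _ k hY1 hY2 hk hσ hs0 h1 (by positivity)
      (by positivity) (by positivity) (htail (L * s / 2) (by positivity) (by linarith))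
      (htail (s / L) (by positivity) hsL)
    have := hc.trans hr
    rw [hLs, hs2] at this
    exact this
  have hA0 : ∀ᶠ h in 𝓝[>] (0 : ℝ), 0 ≤ A h := by
    filter_upwards [self_mem_nhdsWithin] with h hh
    have := hεpos h hh
    positivity
  have hB0 : ∀ᶠ h in 𝓝[>] (0 : ℝ), 0 ≤ B h := by
    filter_upwards [self_mem_nhdsWithin] with h hh
    have := hεpos h hh
    positivity
  refine ⟨fun h => -min (T h) (K₁ * A h), fun _ => 0, fun h => -(T h - min (T h) (K₁ * A h)),
    fun h hh => ?_, ?_, isLittleO_zero _ _, ?_⟩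
  · rw [hmain h hh]; ring
  · refine IsBigO.of_bound K₁ ?_
    filter_upwards [hA0] with h ha
    rw [norm_neg, Real.norm_of_nonneg (le_min (hT0 h) (by positivity)), Real.norm_of_nonneg ha]
    exact min_le_right _ _
  · refine IsBigO.of_bound K₂ ?_
    filter_upwards [hA0, hB0, hbound] with h ha hb hle
    rw [norm_neg, Real.norm_of_nonneg (sub_nonneg.2 (min_le_left _ _)), Real.norm_of_nonneg hb]
    rcases min_cases (T h) (K₁ * A h) with ⟨e, _⟩ | ⟨e, _⟩ <;> rw [e]
    · simp only [sub_self]; positivity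
    · linarith

end
end
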